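/- arXiv:1904.09528 — 3 statements merged into one kernel-verified Lean document; each statement's English description precedes it below -/
import Mathlib

section
/- Let ϕ, φ, φ̂, f₂, f₃, m₂ be as in the context, and assume in addition that m₂ = ∫_{ℝ²} |x|² φ(x) dx = 0. Then there exists a constant C > 0 (depending on ϕ) such that for k = 0, 1, 2 and all x ∈ ℝ: |f₂^{(k)}(x)| + |f₃^{(k)}(x)| ≤ C / (1 + x⁴), where f^{(k)} denotes the k-th derivative. -/
open MeasureTheory Real Filter Topology
open scoped ENNReal

noncomputable section

/-- Convolution on `ℝ²`: `(ϕ∗ϕ)(x) = ∫ ϕ(y) ϕ(x−y) dy`. -/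
def conv2 (ϕ : ℝ × ℝ → ℝ) (x : ℝ × ℝ) : ℝ := ∫ y : ℝ × ℝ, ϕ y * ϕ (x - y)

/-- The Fourier transform on `ℝ²`: `ĝ(ξ) = ∫ g(x) e^{−i x·ξ} dx`. -/
def ft2 (g : ℝ × ℝ → ℝ) (ξ : ℝ × ℝ) : ℂ :=
  ∫ x : ℝ × ℝ, (g x : ℂ) * Complex.exp (-Complex.I * ((x.1 : ℂ) * (ξ.1 : ℂ) + (x.2 : ℂ) * (ξ.2 : ℂ)))

/-- `f₁(x) = (x/π) ∫_{ℝ²} e^{ixη₁} (−i η₁ η₂²)/(η₁²+η₂²)² φ̂(η) dη` with `φ = ϕ∗ϕ`. -/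
def f1 (ϕ : ℝ × ℝ → ℝ) (x : ℝ) : ℂ :=
  ((x / π : ℝ) : ℂ) * ∫ η : ℝ × ℝ,
    Complex.exp (Complex.I * (x : ℂ) * (η.1 : ℂ)) *
      (-Complex.I * (η.1 : ℂ) * (η.2 : ℂ) ^ 2 / ((η.1 : ℂ) ^ 2 + (η.2 : ℂ) ^ 2) ^ 2) *
      ft2 (conv2 ϕ) η

/-- `f₂(x) = (x/π) ∫_{ℝ²} e^{ixη₁} (−i η₁ (η₁²−η₂²))/(η₁²+η₂²)² φ̂(η) dη` with `φ = ϕ∗ϕ`. -/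
def f2 (ϕ : ℝ × ℝ → ℝ) (x : ℝ) : ℂ :=
  ((x / π : ℝ) : ℂ) * ∫ η : ℝ × ℝ,
    Complex.exp (Complex.I * (x : ℂ) * (η.1 : ℂ)) *
      (-Complex.I * (η.1 : ℂ) * ((η.1 : ℂ) ^ 2 - (η.2 : ℂ) ^ 2) /
        ((η.1 : ℂ) ^ 2 + (η.2 : ℂ) ^ 2) ^ 2) *
      ft2 (conv2 ϕ) η

/-- `f₃ = f₁ − 1`. -/
def f3 (ϕ : ℝ × ℝ → ℝ) (x : ℝ) : ℂ := f1 ϕ x - 1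

/-- `m₁ = ∫_{ℝ²} |x| (ϕ∗ϕ)(x) dx`. -/
def m1 (ϕ : ℝ × ℝ → ℝ) : ℝ := ∫ x : ℝ × ℝ, Real.sqrt (x.1 ^ 2 + x.2 ^ 2) * conv2 ϕ x

/-- `m₂ = ∫_{ℝ²} |x|² (ϕ∗ϕ)(x) dx`. -/
def m2 (ϕ : ℝ × ℝ → ℝ) : ℝ := ∫ x : ℝ × ℝ, (x.1 ^ 2 + x.2 ^ 2) * conv2 ϕ x


lemma hh_weight_integrable :
    Integrable (fun z : ℝ × ℝ => (1 + z.1 ^ 2)⁻¹ * (|z.1| / (z.1 ^ 2 + z.2 ^ 2))) := by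
  have key : ∀ s : ℝ, s ≠ 0 → ∀ u : ℝ, (1 + s ^ 2)⁻¹ * (|s| / (s ^ 2 + u ^ 2)) =
      ((1 + s ^ 2)⁻¹ * |s|⁻¹) * (1 + (u / s) ^ 2)⁻¹ := by
    intro s hs u
    have h1 : |s| ≠ 0 := abs_ne_zero.mpr hs
    have h2 : |s| ^ 2 = s ^ 2 := sq_abs s
    have h3 : s ^ 2 + u ^ 2 ≠ 0 := by positivity
    rw [show 1 + (u / s) ^ 2 = (s ^ 2 + u ^ 2) / s ^ 2 by field_simp, ← h2]
    rw [inv_div]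
    field_simp
  rw [Measure.volume_eq_prod, integrable_prod_iff]
  · constructor
    · filter_upwards [Measure.ae_ne volume (0 : ℝ)] with s hs
      simp only [key s hs]
      exact (integrable_inv_one_add_sq.comp_div hs).const_mul _
    · refine (integrable_inv_one_add_sq.const_mul π).congr ?_
      filter_upwards [Measure.ae_ne volume (0 : ℝ)] with s hs
      have : ∀ u : ℝ, ‖(1 + s ^ 2)⁻¹ * (|s| / (s ^ 2 + u ^ 2))‖ =
          ((1 + s ^ 2)⁻¹ * |s|⁻¹) * (1 + (u / s) ^ 2)⁻¹ := by
        intro u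
        rw [← key s hs, Real.norm_of_nonneg (by positivity)]
      simp only [this]
      rw [integral_const_mul, Measure.integral_comp_div (fun x : ℝ => (1 + x ^ 2)⁻¹),
        integral_univ_inv_one_add_sq]
      have h1 : |s| ≠ 0 := abs_ne_zero.mpr hs
      simp only [smul_eq_mul]
      field_simp
  · apply Measurable.aestronglyMeasurable
    fun_prop

lemma hh_T1 {A : ℝ} (hA : 0 < A) :
    ∫ t in Set.Ioi (0 : ℝ), t * Real.exp (-t * A) = 1 / A ^ 2 := by
  have := Real.integral_rpow_mul_exp_neg_mul_Ioi (a := 2) (r := A) (by norm_num) hA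
  rw [show (1 : ℝ) / A ^ 2 = (1 / A) ^ (2 : ℝ) * Real.Gamma 2 by
    rw [Real.Gamma_two]; norm_num, ← this]
  refine setIntegral_congr_fun measurableSet_Ioi fun t ht => ?_
  norm_num
  left
  ring

lemma hh_T1' {A : ℝ} (hA : 0 < A) :
    IntegrableOn (fun t => t * Real.exp (-t * A)) (Set.Ioi (0 : ℝ)) := by
  refine not_imp_comm.1 integral_undef ?_
  rw [hh_T1 hA]; positivity

lemma hh_T0 {A : ℝ} (hA : 0 < A) :
    ∫ t in Set.Ioi (0 : ℝ), Real.exp (-t * A) = 1 / A := by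
  have := Real.integral_rpow_mul_exp_neg_mul_Ioi (a := 1) (r := A) (by norm_num) hA
  rw [show (1 : ℝ) / A  = (1 / A) ^ (1 : ℝ) * Real.Gamma 1 by
    rw [Real.Gamma_one]; norm_num, ← this]
  refine setIntegral_congr_fun measurableSet_Ioi fun t ht => ?_
  norm_num
  ring

lemma hh_T2 {A : ℝ} (hA : 0 < A) :
    ∫ t in Set.Ioi (0 : ℝ), (t ^ 2)⁻¹ * Real.exp (-A / t) = 1 / A := by
  have := integral_comp_rpow_Ioi (fun t => Real.exp (-t * A)) (p := -1) (by norm_num)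
  rw [← hh_T0 hA, ← this]
  refine setIntegral_congr_fun measurableSet_Ioi fun t (ht : 0 < t) => ?_
  simp only [smul_eq_mul]
  rw [Real.rpow_neg_one, show (-1 - 1 : ℝ) = -(2 : ℕ) by norm_num, Real.rpow_neg ht.le,
    Real.rpow_natCast]
  norm_num
  left
  field_simp

lemma hh_T3 {A : ℝ} (hA : 0 < A) :
    ∫ t in Set.Ioi (0 : ℝ), (t ^ 3)⁻¹ * Real.exp (-A / t) = 1 / A ^ 2 := by
  have := integral_comp_rpow_Ioi (fun t => t * Real.exp (-t * A)) (p := -1) (by norm_num)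
  rw [← hh_T1 hA, ← this]
  refine setIntegral_congr_fun measurableSet_Ioi fun t (ht : 0 < t) => ?_
  simp only [smul_eq_mul]
  rw [Real.rpow_neg_one, show (-1 - 1 : ℝ) = -(2 : ℕ) by norm_num, Real.rpow_neg ht.le,
    Real.rpow_natCast]
  norm_num
  rw [show -(t⁻¹ * A) = -A / t by field_simp]
  field_simp

lemma hh_T2' {A : ℝ} (hA : 0 < A) :
    IntegrableOn (fun t => (t ^ 2)⁻¹ * Real.exp (-A / t)) (Set.Ioi (0 : ℝ)) := by
  refine not_imp_comm.1 integral_undef ?_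
  rw [hh_T2 hA]; positivity

lemma hh_T3' {A : ℝ} (hA : 0 < A) :
    IntegrableOn (fun t => (t ^ 3)⁻¹ * Real.exp (-A / t)) (Set.Ioi (0 : ℝ)) := by
  refine not_imp_comm.1 integral_undef ?_
  rw [hh_T3 hA]; positivity

/-- Gaussian integrand with frequency. -/
lemma hh_gauss_norm (t a s : ℝ) (n : ℕ) :
    ‖(s : ℂ) ^ n * Complex.exp (Complex.I * a * s - t * s ^ 2)‖ = |s| ^ n * Real.exp (-t * s ^ 2) := by
  rw [norm_mul, norm_pow, Complex.norm_real, Complex.norm_exp, Real.norm_eq_abs]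
  congr 2
  simp [← Complex.ofReal_pow]

lemma hh_gauss_int {t : ℝ} (ht : 0 < t) (a : ℝ) (n : ℕ) :
    Integrable (fun s : ℝ => (s : ℂ) ^ n * Complex.exp (Complex.I * a * s - t * s ^ 2)) := by
  have h := integrable_rpow_mul_exp_neg_mul_sq ht (s := n) (by
    have : (0 : ℝ) ≤ n := n.cast_nonneg
    linarith)
  refine h.norm.mono' (by fun_prop) (Eventually.of_forall fun s => ?_)
  rw [hh_gauss_norm, norm_mul, Real.rpow_natCast, norm_pow, Real.norm_eq_abs,
    Real.norm_of_nonneg (Real.exp_pos _).le]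

/-- Gaussian moments. -/
def hhM (t a : ℝ) (n : ℕ) : ℂ :=
  ∫ s : ℝ, (s : ℂ) ^ n * Complex.exp (Complex.I * a * s - t * s ^ 2)

lemma hh_rec0 {t : ℝ} (ht : 0 < t) (a : ℝ) :
    Complex.I * a * hhM t a 0 - 2 * t * hhM t a 1 = 0 := by
  have h := integral_eq_zero_of_hasDerivAt_of_integrable
    (f := fun s : ℝ => (s : ℂ) ^ 0 * Complex.exp (Complex.I * a * s - t * s ^ 2))
    (f' := fun s : ℝ => Complex.I * a * ((s : ℂ) ^ 0 * Complex.exp (Complex.I * a * s - t * s ^ 2))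
      - 2 * t * ((s : ℂ) ^ 1 * Complex.exp (Complex.I * a * s - t * s ^ 2)))
    (fun s => by
      have h1 : HasDerivAt (fun s : ℝ => (s : ℂ)) 1 s := Complex.ofRealCLM.hasDerivAt
      have h2 := (((h1.const_mul (Complex.I * a)).sub ((h1.pow 2).const_mul (t : ℂ))).cexp)
      convert! h2 using 1
      · ext; simp
      · simp; ring)
    (((hh_gauss_int ht a 0).const_mul _).sub ((hh_gauss_int ht a 1).const_mul _))
    (hh_gauss_int ht a 0)
  rw [integral_sub ((hh_gauss_int ht a 0).const_mul _) ((hh_gauss_int ht a 1).const_mul _),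
    integral_const_mul, integral_const_mul] at h
  exact h

lemma hh_rec {t : ℝ} (ht : 0 < t) (a : ℝ) (n : ℕ) :
    (n + 1) * hhM t a n + Complex.I * a * hhM t a (n + 1) - 2 * t * hhM t a (n + 2) = 0 := by
  have i1 := (hh_gauss_int ht a n).const_mul ((n : ℂ) + 1)
  have i2 := (hh_gauss_int ht a (n + 1)).const_mul (Complex.I * a)
  have i3 := (hh_gauss_int ht a (n + 2)).const_mul (2 * t : ℂ)
  have h := integral_eq_zero_of_hasDerivAt_of_integrable
    (f := fun s : ℝ => (s : ℂ) ^ (n + 1) * Complex.exp (Complex.I * a * s - t * s ^ 2))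
    (f' := fun s : ℝ => ((n : ℂ) + 1) * ((s : ℂ) ^ n * Complex.exp (Complex.I * a * s - t * s ^ 2))
      + Complex.I * a * ((s : ℂ) ^ (n + 1) * Complex.exp (Complex.I * a * s - t * s ^ 2))
      - 2 * t * ((s : ℂ) ^ (n + 2) * Complex.exp (Complex.I * a * s - t * s ^ 2)))
    (fun s => by
      have h1 : HasDerivAt (fun s : ℝ => (s : ℂ)) 1 s := Complex.ofRealCLM.hasDerivAt
      have h2 := (((h1.const_mul (Complex.I * a)).sub ((h1.pow 2).const_mul (t : ℂ))).cexp)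
      have h3 := (h1.pow (n + 1)).mul h2
      convert! h3 using 1
      simp; ring)
    ((i1.add i2).sub i3)
    (hh_gauss_int ht a (n + 1))
  have h2 := integral_sub (i1.add i2) i3
  simp only [Pi.add_apply] at h2
  rw [h2, integral_add i1 i2,
    integral_const_mul, integral_const_mul, integral_const_mul] at h
  exact h

lemma hh_M0 {t : ℝ} (ht : 0 < t) (a : ℝ) :
    hhM t a 0 = ((√(π / t) * Real.exp (-a ^ 2 / (4 * t)) : ℝ) : ℂ) := by
  have h := integral_cexp_quadratic (b := -t) (by simpa using ht) (Complex.I * a) 0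
  have e : hhM t a 0 = ∫ x : ℝ, Complex.exp (-(t : ℂ) * x ^ 2 + Complex.I * a * x + 0) := by
    unfold hhM
    congr 1; ext s
    rw [pow_zero, one_mul]; congr 1; ring
  rw [e, h]
  push_cast
  congr 1
  · rw [Real.sqrt_eq_rpow, neg_neg, Complex.ofReal_cpow (by positivity)]
    push_cast; rfl
  · congr 1
    have : (t : ℂ) ≠ 0 := by exact_mod_cast ht.ne'
    rw [mul_pow, Complex.I_sq]
    field_simp
    ring

lemma hh_M1 {t : ℝ} (ht : 0 < t) (a : ℝ) :
    hhM t a 1 = Complex.I * a / (2 * t) * hhM t a 0 := by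
  have h := hh_rec0 ht a
  have : (t : ℂ) ≠ 0 := by exact_mod_cast ht.ne'
  field_simp
  linear_combination -h

lemma hh_M2 {t : ℝ} (ht : 0 < t) (a : ℝ) :
    hhM t a 2 = (1 / (2 * t) - a ^ 2 / (4 * t ^ 2)) * hhM t a 0 := by
  have h := hh_rec ht a 0
  norm_num at h
  rw [hh_M1 ht] at h
  have h0 : (t : ℂ) ≠ 0 := by exact_mod_cast ht.ne'
  have hI := Complex.I_sq
  field_simp at h ⊢
  simp only [hI] at h
  linear_combination -2 * h

lemma hh_M3 {t : ℝ} (ht : 0 < t) (a : ℝ) :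
    hhM t a 3 = Complex.I * a / (2 * t) * (3 / (2 * t) - a ^ 2 / (4 * t ^ 2)) * hhM t a 0 := by
  have h := hh_rec ht a 1
  norm_num at h
  rw [hh_M1 ht, hh_M2 ht] at h
  have h0 : (t : ℂ) ≠ 0 := by exact_mod_cast ht.ne'
  field_simp at h ⊢
  linear_combination -h

lemma hh_ft2_norm_le (g : ℝ × ℝ → ℝ) (ξ : ℝ × ℝ) : ‖ft2 g ξ‖ ≤ ∫ x, |g x| := by
  unfold ft2
  refine (norm_integral_le_integral_norm _).trans (le_of_eq ?_)
  congr 1; ext x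
  rw [norm_mul, Complex.norm_real, Complex.norm_exp, Real.norm_eq_abs]
  simp

lemma hh_ft2_continuous {g : ℝ × ℝ → ℝ} (hg : Continuous g) (hs : HasCompactSupport g) :
    Continuous (ft2 g) := by
  unfold ft2
  refine continuous_of_dominated (bound := fun x => |g x|) (fun ξ => ?_) (fun ξ => ?_) ?_ ?_
  · exact Continuous.aestronglyMeasurable (by fun_prop)
  · refine Eventually.of_forall fun x => ?_
    rw [norm_mul, Complex.norm_real, Complex.norm_exp, Real.norm_eq_abs]
    simp
  · exact (hg.integrable_of_hasCompactSupport hs).abs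
  · refine Eventually.of_forall fun x => ?_
    fun_prop

lemma hh_ft2_deriv {g : ℝ × ℝ → ℝ} (hg : ContDiff ℝ 1 g) (hs : HasCompactSupport g)
    (ξ : ℝ × ℝ) :
    ft2 (fun x => fderiv ℝ g x (1, 0)) ξ = Complex.I * ξ.1 * ft2 g ξ := by
  set e : ℝ × ℝ → ℂ := fun x =>
    Complex.exp (-Complex.I * ((x.1 : ℂ) * (ξ.1 : ℂ) + (x.2 : ℂ) * (ξ.2 : ℂ))) with he
  have hf : ∀ x, HasFDerivAt (fun x => (g x : ℂ)) (Complex.ofRealCLM.comp (fderiv ℝ g x)) x :=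
    fun x => Complex.ofRealCLM.hasFDerivAt.comp x (hg.differentiable (by simp) x).hasFDerivAt
  have hed : Differentiable ℝ e := by
    have h1 : Differentiable ℝ (fun x : ℝ × ℝ => (x.1 : ℂ)) :=
      Complex.ofRealCLM.differentiable.comp differentiable_fst
    have h2 : Differentiable ℝ (fun x : ℝ × ℝ => (x.2 : ℂ)) :=
      Complex.ofRealCLM.differentiable.comp differentiable_snd
    exact (((h1.mul_const _).add (h2.mul_const _)).const_mul _).cexp
  have hev : ∀ x, fderiv ℝ e x (1, 0) = -Complex.I * ξ.1 * e x := by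
    intro x
    have hl : HasDerivAt (fun s : ℝ => e (x + s • ((1 : ℝ), (0 : ℝ)))) (fderiv ℝ e x (1, 0)) 0 :=
      (hed x).hasFDerivAt.hasLineDerivAt (1, 0)
    have h1 : HasDerivAt (fun s : ℝ => (s : ℂ)) 1 0 := Complex.ofRealCLM.hasDerivAt
    have h2 : HasDerivAt (fun s : ℝ => e (x + s • ((1 : ℝ), (0 : ℝ)))) (-Complex.I * ξ.1 * e x) 0 := by
      have h3 := (((((h1.const_add (x.1 : ℂ)).mul_const (ξ.1 : ℂ)).add_const
        ((x.2 : ℂ) * (ξ.2 : ℂ))).const_mul (-Complex.I)).cexp)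
      convert! h3 using 1
      · ext s; simp [he]
      · simp [he]; ring
    exact hl.unique h2
  have hec : Continuous e := hed.continuous
  have hgc : Continuous g := hg.continuous
  have hdc : Continuous (fun x => fderiv ℝ g x (1, 0)) :=
    (hg.continuous_fderiv (by simp)).clm_apply continuous_const
  have hsd : HasCompactSupport (fun x => fderiv ℝ g x (1, 0)) := hs.fderiv_apply ℝ _
  have hsC : HasCompactSupport (fun x => (g x : ℂ)) := hs.comp_left Complex.ofReal_zero
  have hsdC : HasCompactSupport (fun x => ((fderiv ℝ g x (1, 0) : ℝ) : ℂ)) :=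
    hsd.comp_left Complex.ofReal_zero
  have hfv : ∀ x, fderiv ℝ (fun x => (g x : ℂ)) x (1, 0) = ((fderiv ℝ g x (1, 0) : ℝ) : ℂ) := by
    intro x; rw [(hf x).fderiv]; rfl
  have key := integral_mul_fderiv_eq_neg_fderiv_mul_of_integrable (𝕜 := ℂ) (μ := volume)
    (f := fun x => (g x : ℂ)) (g := e) (v := ((1 : ℝ), (0 : ℝ))) ?_ ?_ ?_
    (fun x _ => (hf x).differentiableAt) (fun x _ => hed x)
  · simp only [hev, hfv] at key
    have : ft2 (fun x => fderiv ℝ g x (1, 0)) ξ = -∫ x, (g x : ℂ) * (-Complex.I * ξ.1 * e x) := by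
      rw [key, neg_neg]; rfl
    rw [this, ← integral_neg]
    unfold ft2
    rw [← integral_const_mul]
    congr 1; ext x; simp only [he]; ring
  · simp only [hfv]
    exact Continuous.integrable_of_hasCompactSupport (by fun_prop) hsdC.mul_right
  · simp only [hev]
    exact Continuous.integrable_of_hasCompactSupport (by fun_prop) hsC.mul_right
  · exact Continuous.integrable_of_hasCompactSupport (by fun_prop) hsC.mul_right

lemma hh_ft2_decay {g : ℝ × ℝ → ℝ} (hg : ContDiff ℝ (⊤ : ℕ∞) g) (hs : HasCompactSupport g) :
    ∃ C : ℝ, 0 ≤ C ∧ ∀ ξ : ℝ × ℝ, ‖ft2 g ξ‖ ≤ C * (1 + ξ.1 ^ 2)⁻¹ := by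
  set g1 : ℝ × ℝ → ℝ := fun x => fderiv ℝ g x (1, 0) with hg1
  have h1 : ContDiff ℝ (⊤ : ℕ∞) g1 := (hg.fderiv_right (by simp)).clm_apply contDiff_const
  have hs1 : HasCompactSupport g1 := hs.fderiv_apply ℝ _
  have e1 := hh_ft2_deriv (hg.of_le (by exact_mod_cast le_top)) hs
  have e2 := hh_ft2_deriv (h1.of_le (by exact_mod_cast le_top)) hs1
  refine ⟨(∫ x, |g x|) + ∫ x, |fderiv ℝ g1 x (1, 0)|, ?_, fun ξ => ?_⟩
  · exact add_nonneg (integral_nonneg fun _ => abs_nonneg _) (integral_nonneg fun _ => abs_nonneg _)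
  · have b1 := hh_ft2_norm_le g ξ
    have b2 := hh_ft2_norm_le (fun x => fderiv ℝ g1 x (1, 0)) ξ
    rw [e2, e1] at b2
    simp only [norm_mul, Complex.norm_I, Complex.norm_real, Real.norm_eq_abs, one_mul] at b2
    rw [← mul_assoc, abs_mul_abs_self] at b2
    rw [← div_eq_mul_inv, le_div_iff₀ (by positivity)]
    nlinarith

/-- The physical-space kernel. -/
def hhG (a b : ℝ) (z : ℝ × ℝ) : ℝ :=
  z.1 * ((3 * a + b) * (z.1 ^ 2 + z.2 ^ 2) - 2 * a * z.1 ^ 2 - 2 * b * z.2 ^ 2) /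
    (z.1 ^ 2 + z.2 ^ 2) ^ 2

lemma hh_G_bound (a b : ℝ) (z : ℝ × ℝ) :
    |hhG a b z| ≤ (5 * |a| + 3 * |b|) * (|z.1| / (z.1 ^ 2 + z.2 ^ 2)) := by
  unfold hhG
  set p := z.1; set q := z.2
  rcases eq_or_ne (p ^ 2 + q ^ 2) 0 with h0 | h0
  · rw [h0]; simp
  have hpos : 0 < p ^ 2 + q ^ 2 := lt_of_le_of_ne (by positivity) h0.symm
  rw [abs_div, abs_mul, abs_of_pos (by positivity : 0 < (p ^ 2 + q ^ 2) ^ 2)]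
  have hb : |(3 * a + b) * (p ^ 2 + q ^ 2) - 2 * a * p ^ 2 - 2 * b * q ^ 2|
      ≤ (5 * |a| + 3 * |b|) * (p ^ 2 + q ^ 2) := by
    have hp := sq_nonneg p
    have hq := sq_nonneg q
    rw [abs_le]
    have a1 := le_abs_self a
    have a2 := neg_abs_le a
    have b1 := le_abs_self b
    have b2 := neg_abs_le b
    constructor <;> nlinarith [mul_le_mul_of_nonneg_right a1 hp, mul_le_mul_of_nonneg_right a1 hq,
      mul_le_mul_of_nonneg_right a2 hp, mul_le_mul_of_nonneg_right a2 hq,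
      mul_le_mul_of_nonneg_right b1 hp, mul_le_mul_of_nonneg_right b1 hq,
      mul_le_mul_of_nonneg_right b2 hp, mul_le_mul_of_nonneg_right b2 hq,
      mul_nonneg (abs_nonneg a) hp, mul_nonneg (abs_nonneg a) hq,
      mul_nonneg (abs_nonneg b) hp, mul_nonneg (abs_nonneg b) hq]
  rw [div_le_iff₀ (by positivity)]
  calc _ ≤ |p| * ((5 * |a| + 3 * |b|) * (p ^ 2 + q ^ 2)) := by gcongr
    _ = _ := by field_simp

lemma hh_inner {t : ℝ} (ht : 0 < t) (a b z1 z2 : ℝ) :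
    ∫ η : ℝ × ℝ, (-Complex.I * η.1 * (a * (η.1 : ℂ) ^ 2 + b * (η.2 : ℂ) ^ 2)) *
      (Complex.exp (Complex.I * z1 * η.1 - t * η.1 ^ 2) *
        Complex.exp (Complex.I * z2 * η.2 - t * η.2 ^ 2)) * t =
    ((π * z1 / 2 * ((3 * a + b) / 2 * ((t ^ 2)⁻¹ * Real.exp (-((z1 ^ 2 + z2 ^ 2) / 4) / t))
      - (a * z1 ^ 2 + b * z2 ^ 2) / 4 * ((t ^ 3)⁻¹ * Real.exp (-((z1 ^ 2 + z2 ^ 2) / 4) / t))) : ℝ) : ℂ) := by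
  have i1 : Integrable (fun η : ℝ × ℝ => (-Complex.I * a * t) *
      (((η.1 : ℂ) ^ 3 * Complex.exp (Complex.I * z1 * η.1 - t * η.1 ^ 2)) *
        ((η.2 : ℂ) ^ 0 * Complex.exp (Complex.I * z2 * η.2 - t * η.2 ^ 2)))) :=
    ((hh_gauss_int ht z1 3).mul_prod (hh_gauss_int ht z2 0)).const_mul _
  have i2 : Integrable (fun η : ℝ × ℝ => (-Complex.I * b * t) *
      (((η.1 : ℂ) ^ 1 * Complex.exp (Complex.I * z1 * η.1 - t * η.1 ^ 2)) *
        ((η.2 : ℂ) ^ 2 * Complex.exp (Complex.I * z2 * η.2 - t * η.2 ^ 2)))) :=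
    ((hh_gauss_int ht z1 1).mul_prod (hh_gauss_int ht z2 2)).const_mul _
  have e : (∫ η : ℝ × ℝ, (-Complex.I * η.1 * (a * (η.1 : ℂ) ^ 2 + b * (η.2 : ℂ) ^ 2)) *
      (Complex.exp (Complex.I * z1 * η.1 - t * η.1 ^ 2) *
        Complex.exp (Complex.I * z2 * η.2 - t * η.2 ^ 2)) * t) =
      (-Complex.I * a * t) * (hhM t z1 3 * hhM t z2 0) +
      (-Complex.I * b * t) * (hhM t z1 1 * hhM t z2 2) := by
    unfold hhM
    rw [← integral_prod_mul, ← integral_prod_mul, ← integral_const_mul, ← integral_const_mul,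
      ← Measure.volume_eq_prod, ← integral_add i1 i2]
    congr 1; ext η; ring
  rw [e, hh_M3 ht, hh_M2 ht, hh_M1 ht, hh_M0 ht, hh_M0 ht]
  have hE : √(π / t) * Real.exp (-z1 ^ 2 / (4 * t)) * (√(π / t) * Real.exp (-z2 ^ 2 / (4 * t))) =
      π / t * Real.exp (-((z1 ^ 2 + z2 ^ 2) / 4) / t) := by
    rw [mul_mul_mul_comm, Real.mul_self_sqrt (by positivity), ← Real.exp_add]
    congr 2; field_simp; ring
  have hE' := congrArg (fun r : ℝ => (r : ℂ)) hE
  rw [Complex.ofReal_mul] at hE'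
  set m1 : ℂ := ((√(π / t) * Real.exp (-z1 ^ 2 / (4 * t)) : ℝ) : ℂ)
  set m2 : ℂ := ((√(π / t) * Real.exp (-z2 ^ 2 / (4 * t)) : ℝ) : ℂ)
  have h0 : (t : ℂ) ≠ 0 := by exact_mod_cast ht.ne'
  have e2 : (-Complex.I * a * t) * (Complex.I * z1 / (2 * t) * (3 / (2 * t) - z1 ^ 2 / (4 * t ^ 2)) * m1 * m2) +
      (-Complex.I * b * t) * (Complex.I * z1 / (2 * t) * m1 * ((1 / (2 * t) - z2 ^ 2 / (4 * t ^ 2)) * m2))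
      = (-Complex.I ^ 2) * (z1 / 2 * ((3 * a + b) / (2 * t) - (a * z1 ^ 2 + b * z2 ^ 2) / (4 * t ^ 2))) * (m1 * m2) := by
    field_simp; ring
  rw [e2, hE', Complex.I_sq]
  push_cast
  field_simp

lemma hh_Q {h : ℝ × ℝ → ℂ} {k : ℝ × ℝ → ℝ → ℝ} {r : ℝ × ℝ → ℝ}
    (hm : Measurable (Function.uncurry fun y t => h y * (k y t : ℂ)))
    (hk : ∀ y t, 0 < t → 0 ≤ k y t)
    (hi : ∀ y, h y ≠ 0 → IntegrableOn (k y) (Set.Ioi 0))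
    (hr : ∀ y, h y ≠ 0 → ∫ t in Set.Ioi 0, k y t = r y)
    (hinteg : Integrable (fun y => ‖h y‖ * r y)) :
    Integrable (Function.uncurry fun y t => h y * (k y t : ℂ))
      (volume.prod (volume.restrict (Set.Ioi 0))) := by
  rw [integrable_prod_iff hm.aestronglyMeasurable]
  constructor
  · refine Eventually.of_forall fun y => ?_
    simp only [Function.uncurry_apply_pair]
    rcases eq_or_ne (h y) 0 with h0 | h0
    · simp [h0]
    · exact (Integrable.ofReal (hi y h0)).const_mul _
  · refine hinteg.congr (Eventually.of_forall fun y => ?_)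
    simp only [Function.uncurry_apply_pair, norm_mul, Complex.norm_real]
    rw [integral_const_mul]
    rcases eq_or_ne (h y) 0 with h0 | h0
    · simp [h0]
    · rw [← hr y h0]
      congr 1
      refine setIntegral_congr_fun measurableSet_Ioi fun t ht => ?_
      exact (Real.norm_of_nonneg (hk y t ht)).symm

lemma hh_S {x C : ℝ} {u : ℝ × ℝ → ℝ} (hu : Measurable u)
    (hb : ∀ y : ℝ × ℝ, |u y| ≤ C * ((1 + (x - y.1) ^ 2)⁻¹ *
      (|x - y.1| / ((x - y.1) ^ 2 + (-y.2) ^ 2)))) : Integrable u := by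
  have h := (hh_weight_integrable.comp_sub_left ((x, 0) : ℝ × ℝ)).const_mul C
  refine h.mono' hu.aestronglyMeasurable (Eventually.of_forall fun y => ?_)
  simpa using hb y

lemma hh_g_bound {g : ℝ × ℝ → ℝ} (hg : Continuous g) (hs : HasCompactSupport g) (x : ℝ) :
    ∃ C : ℝ, 0 ≤ C ∧ ∀ y : ℝ × ℝ, |g y| ≤ C * (1 + (x - y.1) ^ 2)⁻¹ := by
  have h1 : HasCompactSupport (fun y : ℝ × ℝ => g y * (1 + (x - y.1) ^ 2)) := hs.mul_right
  obtain ⟨C, hC⟩ := Continuous.bounded_above_of_compact_support (by fun_prop) h1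
  refine ⟨C, (norm_nonneg _).trans (hC 0), fun y => ?_⟩
  have := hC y
  rw [norm_mul, Real.norm_eq_abs, Real.norm_of_nonneg (by positivity)] at this
  rw [← div_eq_mul_inv, le_div_iff₀ (by positivity)]
  exact this

/-- time-integral integrand -/
def hhK (g : ℝ × ℝ → ℝ) (a b x : ℝ) (y : ℝ × ℝ) (t : ℝ) : ℂ :=
  (g y : ℂ) * ((π * (x - y.1) / 2 * ((3 * a + b) / 2 * ((t ^ 2)⁻¹ * Real.exp (-(((x - y.1) ^ 2 + (-y.2) ^ 2) / 4) / t))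
      - (a * (x - y.1) ^ 2 + b * (-y.2) ^ 2) / 4 * ((t ^ 3)⁻¹ * Real.exp (-(((x - y.1) ^ 2 + (-y.2) ^ 2) / 4) / t))) : ℝ) : ℂ)

lemma hh_K_split (g : ℝ × ℝ → ℝ) (a b x : ℝ) (y : ℝ × ℝ) (t : ℝ) :
    hhK g a b x y t =
      ((g y * (π * (x - y.1) / 2 * ((3 * a + b) / 2)) : ℝ) : ℂ) *
        (((t ^ 2)⁻¹ * Real.exp (-(((x - y.1) ^ 2 + (-y.2) ^ 2) / 4) / t) : ℝ) : ℂ) -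
      ((g y * (π * (x - y.1) / 2 * ((a * (x - y.1) ^ 2 + b * (-y.2) ^ 2) / 4)) : ℝ) : ℂ) *
        (((t ^ 3)⁻¹ * Real.exp (-(((x - y.1) ^ 2 + (-y.2) ^ 2) / 4) / t) : ℝ) : ℂ) := by
  unfold hhK; push_cast; ring

lemma hh_A_pos {p q : ℝ} (hp : p ≠ 0) : 0 < (p ^ 2 + q ^ 2) / 4 := by positivity

lemma hh_K_int {g : ℝ × ℝ → ℝ} (hg : Continuous g) (hs : HasCompactSupport g) (a b x : ℝ) :
    Integrable (Function.uncurry (hhK g a b x)) (volume.prod (volume.restrict (Set.Ioi 0))) := by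
  obtain ⟨C, hC0, hC⟩ := hh_g_bound hg hs x
  have hgm : Measurable g := hg.measurable
  have e : Function.uncurry (hhK g a b x) =
      (Function.uncurry fun y t => ((g y * (π * (x - y.1) / 2 * ((3 * a + b) / 2)) : ℝ) : ℂ) *
        (((t ^ 2)⁻¹ * Real.exp (-(((x - y.1) ^ 2 + (-y.2) ^ 2) / 4) / t) : ℝ) : ℂ)) -
      (Function.uncurry fun y t => ((g y * (π * (x - y.1) / 2 * ((a * (x - y.1) ^ 2 + b * (-y.2) ^ 2) / 4)) : ℝ) : ℂ) *
        (((t ^ 3)⁻¹ * Real.exp (-(((x - y.1) ^ 2 + (-y.2) ^ 2) / 4) / t) : ℝ) : ℂ)) := by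
    ext ⟨y, t⟩
    exact hh_K_split g a b x y t
  rw [e]
  refine Integrable.sub ?_ ?_
  · refine hh_Q (r := fun y => 1 / (((x - y.1) ^ 2 + (-y.2) ^ 2) / 4)) ?_ ?_ ?_ ?_ ?_
    · unfold Function.uncurry; fun_prop
    · intro y t ht; positivity
    · intro y hy
      refine hh_T2' (hh_A_pos fun h => hy ?_)
      rw [h]; simp
    · intro y hy
      refine hh_T2 (hh_A_pos fun h => hy ?_)
      rw [h]; simp
    · refine hh_S (x := x) (C := C * (π * |3 * a + b|)) (by fun_prop) fun y => ?_
      rw [Complex.norm_real, Real.norm_eq_abs, abs_mul, abs_abs, abs_mul]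
      have h2 : |π * (x - y.1) / 2 * ((3 * a + b) / 2)| = π / 4 * |3 * a + b| * |x - y.1| := by
        rw [abs_mul, abs_div, abs_mul, abs_div, abs_of_pos Real.pi_pos]; norm_num; ring
      rw [h2, abs_of_nonneg (by positivity : 0 ≤ 1 / (((x - y.1) ^ 2 + (-y.2) ^ 2) / 4))]
      calc _ ≤ (C * (1 + (x - y.1) ^ 2)⁻¹) * (π / 4 * |3 * a + b| * |x - y.1|) * (1 / (((x - y.1) ^ 2 + (-y.2) ^ 2) / 4)) := by
            gcongr; exact hC y
        _ = _ := by rw [one_div_div]; ring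
  · refine hh_Q (r := fun y => 1 / (((x - y.1) ^ 2 + (-y.2) ^ 2) / 4) ^ 2) ?_ ?_ ?_ ?_ ?_
    · unfold Function.uncurry; fun_prop
    · intro y t ht; positivity
    · intro y hy
      refine hh_T3' (hh_A_pos fun h => hy ?_)
      rw [h]; simp
    · intro y hy
      refine hh_T3 (hh_A_pos fun h => hy ?_)
      rw [h]; simp
    · refine hh_S (x := x) (C := C * (2 * π * (|a| + |b|))) (by fun_prop) fun y => ?_
      rw [Complex.norm_real, Real.norm_eq_abs, abs_mul, abs_abs, abs_mul]
      have h3 : |a * (x - y.1) ^ 2 + b * (-y.2) ^ 2| ≤ (|a| + |b|) * ((x - y.1) ^ 2 + (-y.2) ^ 2) := by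
        refine (abs_add_le _ _).trans ?_
        rw [abs_mul, abs_mul, abs_of_nonneg (sq_nonneg (x - y.1)), abs_of_nonneg (sq_nonneg (-y.2))]
        nlinarith [mul_nonneg (abs_nonneg a) (sq_nonneg (-y.2)), mul_nonneg (abs_nonneg b) (sq_nonneg (x - y.1))]
      have h2 : |π * (x - y.1) / 2 * ((a * (x - y.1) ^ 2 + b * (-y.2) ^ 2) / 4)| ≤
          π / 8 * |x - y.1| * ((|a| + |b|) * ((x - y.1) ^ 2 + (-y.2) ^ 2)) := by
        rw [abs_mul, abs_div, abs_mul, abs_div, abs_of_pos Real.pi_pos]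
        norm_num at h3 ⊢
        calc _ = π / 8 * |x - y.1| * |a * (x - y.1) ^ 2 + b * y.2 ^ 2| := by ring
          _ ≤ _ := by gcongr
      rw [abs_of_nonneg (by positivity : 0 ≤ 1 / (((x - y.1) ^ 2 + (-y.2) ^ 2) / 4) ^ 2)]
      calc _ ≤ (C * (1 + (x - y.1) ^ 2)⁻¹) * (π / 8 * |x - y.1| * ((|a| + |b|) * ((x - y.1) ^ 2 + (-y.2) ^ 2))) * (1 / (((x - y.1) ^ 2 + (-y.2) ^ 2) / 4) ^ 2) := by
            gcongr; exact hC y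
        _ = _ := by
          rcases eq_or_ne ((x - y.1) ^ 2 + (-y.2) ^ 2) 0 with h0 | h0
          · rw [h0]; simp
          · field_simp; ring

lemma hh_K_integral (g : ℝ × ℝ → ℝ) (a b x : ℝ) (y : ℝ × ℝ) :
    ∫ t in Set.Ioi (0 : ℝ), hhK g a b x y t = ((π * (g y * hhG a b (x - y.1, -y.2)) : ℝ) : ℂ) := by
  rcases eq_or_ne (x - y.1) 0 with h0 | h0
  · simp [hhK, hhG, h0]
  have hA := hh_A_pos (q := -y.2) h0
  simp only [hh_K_split]
  rw [integral_sub ((Integrable.ofReal (hh_T2' hA)).const_mul _)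
    ((Integrable.ofReal (hh_T3' hA)).const_mul _), integral_const_mul, integral_const_mul]
  have e2 := hh_T2 hA
  have e3 := hh_T3 hA
  have e2' : ∫ t in Set.Ioi (0 : ℝ), (((t ^ 2)⁻¹ * Real.exp (-(((x - y.1) ^ 2 + (-y.2) ^ 2) / 4) / t) : ℝ) : ℂ) =
    ((1 / (((x - y.1) ^ 2 + (-y.2) ^ 2) / 4) : ℝ) : ℂ) := by rw [← e2]; exact integral_ofReal
  have e3' : ∫ t in Set.Ioi (0 : ℝ), (((t ^ 3)⁻¹ * Real.exp (-(((x - y.1) ^ 2 + (-y.2) ^ 2) / 4) / t) : ℝ) : ℂ) =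
    ((1 / (((x - y.1) ^ 2 + (-y.2) ^ 2) / 4) ^ 2 : ℝ) : ℂ) := by rw [← e3]; exact integral_ofReal
  rw [e2', e3', ← Complex.ofReal_mul, ← Complex.ofReal_mul, ← Complex.ofReal_sub]
  congr 1
  unfold hhG
  have : (x - y.1) ^ 2 + (-y.2) ^ 2 ≠ 0 := by intro h; rw [h] at hA; norm_num at hA
  simp only
  generalize x - y.1 = p at *
  generalize -y.2 = q at *
  field_simp
  ring

/-- the subordinated integrand on the Fourier side -/
def hhF (g : ℝ × ℝ → ℝ) (a b x : ℝ) (η : ℝ × ℝ) (t : ℝ) : ℂ :=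
  (Complex.exp (Complex.I * (x : ℂ) * (η.1 : ℂ)) *
      (-Complex.I * (η.1 : ℂ) * (a * (η.1 : ℂ) ^ 2 + b * (η.2 : ℂ) ^ 2)) * ft2 g η) *
      ((t * Real.exp (-t * (η.1 ^ 2 + η.2 ^ 2)) : ℝ) : ℂ)

lemma hh_F_norm (g : ℝ × ℝ → ℝ) (a b x : ℝ) (η : ℝ × ℝ) :
  ‖Complex.exp (Complex.I * (x : ℂ) * (η.1 : ℂ)) *
      (-Complex.I * (η.1 : ℂ) * (a * (η.1 : ℂ) ^ 2 + b * (η.2 : ℂ) ^ 2)) * ft2 g η‖ =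
    |η.1| * |a * η.1 ^ 2 + b * η.2 ^ 2| * ‖ft2 g η‖ := by
  rw [norm_mul, norm_mul, Complex.norm_exp, norm_mul, norm_mul,
    show (a * (η.1 : ℂ) ^ 2 + b * (η.2 : ℂ) ^ 2) = ((a * η.1 ^ 2 + b * η.2 ^ 2 : ℝ) : ℂ) by
      push_cast; rfl, Complex.norm_real, Complex.norm_real]
  simp

lemma hh_F_int {g : ℝ × ℝ → ℝ} (hg : ContDiff ℝ (⊤ : ℕ∞) g) (hs : HasCompactSupport g) (a b x : ℝ) :
    Integrable (Function.uncurry (hhF g a b x)) (volume.prod (volume.restrict (Set.Ioi 0))) := by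
  obtain ⟨C, hC0, hC⟩ := hh_ft2_decay hg hs
  have hft : Measurable (ft2 g) := (hh_ft2_continuous hg.continuous hs).measurable
  unfold hhF
  refine hh_Q (r := fun η => 1 / (η.1 ^ 2 + η.2 ^ 2) ^ 2) ?_ ?_ ?_ ?_ ?_
  · unfold Function.uncurry; fun_prop
  · intro y t ht; positivity
  · intro η hη
    refine hh_T1' ?_
    have : η.1 ≠ 0 := fun h => hη (by rw [h]; simp)
    positivity
  · intro η hη
    refine hh_T1 ?_
    have : η.1 ≠ 0 := fun h => hη (by rw [h]; simp)
    positivity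
  · refine (hh_weight_integrable.const_mul (C * (|a| + |b|))).mono'
      (Measurable.aestronglyMeasurable (by fun_prop)) (Eventually.of_forall fun η => ?_)
    rw [hh_F_norm, Real.norm_of_nonneg (by positivity)]
    have h3 : |a * η.1 ^ 2 + b * η.2 ^ 2| ≤ (|a| + |b|) * (η.1 ^ 2 + η.2 ^ 2) := by
      refine (abs_add_le _ _).trans ?_
      rw [abs_mul, abs_mul, abs_of_nonneg (sq_nonneg η.1), abs_of_nonneg (sq_nonneg η.2)]
      nlinarith [mul_nonneg (abs_nonneg a) (sq_nonneg η.2), mul_nonneg (abs_nonneg b) (sq_nonneg η.1)]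
    calc _ ≤ |η.1| * ((|a| + |b|) * (η.1 ^ 2 + η.2 ^ 2)) * (C * (1 + η.1 ^ 2)⁻¹) * (1 / (η.1 ^ 2 + η.2 ^ 2) ^ 2) := by
          gcongr; exact hC η
      _ = _ := by
        rcases eq_or_ne (η.1 ^ 2 + η.2 ^ 2) 0 with h0 | h0
        · rw [h0]; simp
        · field_simp

lemma hh_F_integral (g : ℝ × ℝ → ℝ) (a b x : ℝ) (η : ℝ × ℝ) :
    ∫ t in Set.Ioi (0 : ℝ), hhF g a b x η t =
      Complex.exp (Complex.I * (x : ℂ) * (η.1 : ℂ)) *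
      (-Complex.I * (η.1 : ℂ) * (a * (η.1 : ℂ) ^ 2 + b * (η.2 : ℂ) ^ 2) /
        ((η.1 : ℂ) ^ 2 + (η.2 : ℂ) ^ 2) ^ 2) * ft2 g η := by
  rcases eq_or_ne η.1 0 with h0 | h0
  · simp [hhF, h0]
  have hA : 0 < η.1 ^ 2 + η.2 ^ 2 := by positivity
  unfold hhF
  rw [integral_const_mul]
  have e : ∫ t in Set.Ioi (0 : ℝ), ((t * Real.exp (-t * (η.1 ^ 2 + η.2 ^ 2)) : ℝ) : ℂ) =
      ((1 / (η.1 ^ 2 + η.2 ^ 2) ^ 2 : ℝ) : ℂ) := by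
    rw [← hh_T1 hA]; exact integral_ofReal
  rw [e]
  push_cast
  ring

lemma hh_swap {g : ℝ × ℝ → ℝ} (hg : Continuous g) (hs : HasCompactSupport g) (a b x : ℝ)
    {t : ℝ} (ht : 0 < t) : ∫ η, hhF g a b x η t = ∫ y, hhK g a b x y t := by
  set H : ℝ × ℝ → ℝ × ℝ → ℂ := fun η y => (g y : ℂ) *
    ((-Complex.I * η.1 * (a * (η.1 : ℂ) ^ 2 + b * (η.2 : ℂ) ^ 2)) *
      (Complex.exp (Complex.I * (x - y.1 : ℝ) * η.1 - t * η.1 ^ 2) *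
        Complex.exp (Complex.I * (-y.2 : ℝ) * η.2 - t * η.2 ^ 2)) * t) with hH
  have e1 : ∀ η, hhF g a b x η t = ∫ y, H η y := by
    intro η
    unfold hhF ft2
    rw [← integral_const_mul, ← integral_mul_const]
    congr 1; ext y
    simp only [hH]
    have : Complex.exp (Complex.I * (x - y.1 : ℝ) * η.1 - t * η.1 ^ 2) *
        Complex.exp (Complex.I * (-y.2 : ℝ) * η.2 - t * η.2 ^ 2) =
        Complex.exp (Complex.I * x * η.1) *
        Complex.exp (-Complex.I * (y.1 * η.1 + y.2 * η.2)) *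
        Complex.exp (-t * (η.1 ^ 2 + η.2 ^ 2)) := by
      rw [← Complex.exp_add, ← Complex.exp_add, ← Complex.exp_add]
      congr 1; push_cast; ring
    rw [this]; push_cast; ring
  have e2 : ∀ y, hhK g a b x y t = ∫ η, H η y := by
    intro y
    simp only [hH]
    rw [integral_const_mul, hh_inner ht]
    rfl
  simp only [e1, e2]
  refine integral_integral_swap ?_
  have gi : Integrable g := hg.integrable_of_hasCompactSupport hs
  have j1 := ((hh_gauss_int ht 0 3).norm.mul_prod (hh_gauss_int ht 0 0).norm).const_mul (|a| * t)
  have j2 := ((hh_gauss_int ht 0 1).norm.mul_prod (hh_gauss_int ht 0 2).norm).const_mul (|b| * t)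
  have j := (j1.add j2).mul_prod gi.norm
  refine j.mono' (Continuous.aestronglyMeasurable ?_) (Eventually.of_forall ?_)
  · simp only [hH]; unfold Function.uncurry; fun_prop
  · rintro ⟨η, y⟩
    simp only [hH, Function.uncurry_apply_pair, hh_gauss_norm, Pi.add_apply]
    rw [norm_mul, norm_mul, norm_mul, norm_mul (Complex.exp _), Complex.norm_exp, Complex.norm_exp,
      Complex.norm_real, Complex.norm_real, Real.norm_of_nonneg ht.le, norm_mul, norm_mul,
      show (a * (η.1 : ℂ) ^ 2 + b * (η.2 : ℂ) ^ 2) = ((a * η.1 ^ 2 + b * η.2 ^ 2 : ℝ) : ℂ) by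
      push_cast; rfl, Complex.norm_real, Complex.norm_real]
    have r1 : (Complex.I * ((x - y.1 : ℝ) : ℂ) * η.1 - t * (η.1 : ℂ) ^ 2).re = -t * η.1 ^ 2 := by
      simp [← Complex.ofReal_pow]
    have r2 : (Complex.I * ((-y.2 : ℝ) : ℂ) * η.2 - t * (η.2 : ℂ) ^ 2).re = -t * η.2 ^ 2 := by
      simp [← Complex.ofReal_pow]
    rw [r1, r2]
    have h3 : |a * η.1 ^ 2 + b * η.2 ^ 2| ≤ |a| * |η.1| ^ 2 + |b| * |η.2| ^ 2 := by
      refine (abs_add_le _ _).trans ?_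
      rw [abs_mul, abs_mul, abs_pow, abs_pow]
    simp only [norm_neg, Complex.norm_I, one_mul, Real.norm_eq_abs]
    rw [mul_comm]
    gcongr
    calc _ ≤ |η.1| * (|a| * |η.1| ^ 2 + |b| * |η.2| ^ 2) *
          (Real.exp (-t * η.1 ^ 2) * Real.exp (-t * η.2 ^ 2)) * t := by gcongr
      _ = _ := by ring

lemma hh_main {g : ℝ × ℝ → ℝ} (hg : ContDiff ℝ (⊤ : ℕ∞) g) (hs : HasCompactSupport g) (a b x : ℝ) :
    ∫ η : ℝ × ℝ, Complex.exp (Complex.I * (x : ℂ) * (η.1 : ℂ)) *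
      (-Complex.I * (η.1 : ℂ) * (a * (η.1 : ℂ) ^ 2 + b * (η.2 : ℂ) ^ 2) /
        ((η.1 : ℂ) ^ 2 + (η.2 : ℂ) ^ 2) ^ 2) * ft2 g η =
    ((π * ∫ y : ℝ × ℝ, g y * hhG a b (x - y.1, -y.2) : ℝ) : ℂ) := by
  simp only [← hh_F_integral]
  rw [integral_integral_swap (hh_F_int hg hs a b x),
    setIntegral_congr_fun measurableSet_Ioi (fun t ht => hh_swap hg.continuous hs a b x ht),
    ← integral_integral_swap (hh_K_int hg.continuous hs a b x)]
  simp only [hh_K_integral]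
  rw [← integral_const_mul]
  exact integral_ofReal

/-- The complex coordinate. -/
def hhY (y : ℝ × ℝ) : ℂ := ⟨y.1, y.2⟩

/-- rotation in the plane -/
def hhR (α : ℝ) (y : ℝ × ℝ) : ℝ × ℝ :=
  (Real.cos α * y.1 - Real.sin α * y.2, Real.sin α * y.1 + Real.cos α * y.2)

lemma hh_Y_rot (α : ℝ) (y : ℝ × ℝ) : hhY (hhR α y) = Complex.exp (α * Complex.I) * hhY y := by
  apply Complex.ext
  · simp [hhY, hhR, Complex.exp_ofReal_mul_I_re, Complex.exp_ofReal_mul_I_im]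
  · simp [hhY, hhR, Complex.exp_ofReal_mul_I_re, Complex.exp_ofReal_mul_I_im]; ring

lemma hh_rot {E : Type*} [NormedAddCommGroup E] [NormedSpace ℝ E] (α : ℝ) (F : ℝ × ℝ → E) :
    ∫ y, F (hhR α y) = ∫ y, F y := by
  have e := Complex.volume_preserving_equiv_real_prod
  have me := Complex.measurableEquivRealProd.measurableEmbedding
  rw [← e.integral_comp me, ← e.integral_comp me F]
  have hr := (rotation (Circle.exp α)).measurePreserving
  rw [← hr.integral_comp (rotation (Circle.exp α)).toHomeomorph.measurableEmbedding
    (fun z => F (Complex.measurableEquivRealProd z))]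
  congr 1; ext z
  congr 1
  have := hh_Y_rot α (z.re, z.im)
  have h2 : hhY (z.re, z.im) = z := rfl
  rw [h2] at this
  rw [Complex.measurableEquivRealProd_apply, Complex.measurableEquivRealProd_apply, rotation_apply,
    Circle.coe_exp, ← this]
  rfl

lemma hh_Y_cont : Continuous hhY := by
  have : hhY = fun y : ℝ × ℝ => (y.1 : ℂ) + y.2 * Complex.I := by
    ext y; apply Complex.ext <;> simp [hhY]
  rw [this]; fun_prop

lemma hh_moment {g : ℝ × ℝ → ℝ} (hrot : ∀ α y, g (hhR α y) = g y) {m n : ℕ} (hmn : n ≠ m) :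
    ∫ y, (g y : ℂ) * ((starRingEnd ℂ (hhY y)) ^ m * hhY y ^ n) = 0 := by
  have hd : ((n : ℝ) - m) ≠ 0 := by
    rw [sub_ne_zero]; exact_mod_cast hmn
  set α : ℝ := π / ((n : ℝ) - m) with hα
  have h := hh_rot α (fun y => (g y : ℂ) * ((starRingEnd ℂ (hhY y)) ^ m * hhY y ^ n))
  have hc : (starRingEnd ℂ (Complex.exp (α * Complex.I))) ^ m * Complex.exp (α * Complex.I) ^ n = -1 := by
    rw [← Complex.exp_conj, ← Complex.exp_nat_mul, ← Complex.exp_nat_mul, ← Complex.exp_add,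
      ← Complex.exp_pi_mul_I]
    congr 1
    simp only [map_mul, Complex.conj_ofReal, Complex.conj_I]
    have : (α : ℂ) * ((n : ℂ) - m) = π := by
      rw [hα]; push_cast
      have : ((n : ℂ) - m) ≠ 0 := by exact_mod_cast hd
      field_simp
    linear_combination Complex.I * this
  have e : ∀ y, (g (hhR α y) : ℂ) * ((starRingEnd ℂ (hhY (hhR α y))) ^ m * hhY (hhR α y) ^ n) =
      -((g y : ℂ) * ((starRingEnd ℂ (hhY y)) ^ m * hhY y ^ n)) := by
    intro y
    rw [hrot, hh_Y_rot, map_mul, mul_pow, mul_pow]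
    linear_combination (g y : ℂ) * ((starRingEnd ℂ (hhY y)) ^ m * hhY y ^ n) * hc
  simp only [e] at h
  rw [integral_neg] at h
  linear_combination -(1 / 2 : ℂ) * h

lemma hh_series {g : ℝ × ℝ → ℝ} (hg : Continuous g) (hs : HasCompactSupport g)
    (hrot : ∀ α y, g (hhR α y) = g y) {R x : ℝ} (hR : ∀ y, g y ≠ 0 → ‖hhY y‖ ≤ R) (hR0 : 0 ≤ R)
    (hx : R < |x|) (a : ℕ → ℂ) (ha : ∀ n, ‖a n‖ ≤ n + 1) (m : ℕ) :
    ∫ y, (g y : ℂ) * ((starRingEnd ℂ (hhY y)) ^ m * ∑' n, a n * (hhY y / x) ^ n) =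
      a m * (∫ y, (g y : ℂ) * ((starRingEnd ℂ (hhY y)) ^ m * hhY y ^ m)) / x ^ m := by
  set F : ℕ → ℝ × ℝ → ℂ := fun n y =>
    (a n / x ^ n) * ((g y : ℂ) * ((starRingEnd ℂ (hhY y)) ^ m * hhY y ^ n)) with hF
  have hYc := hh_Y_cont
  have hx0 : 0 < |x| := lt_of_le_of_lt hR0 hx
  have hgC : HasCompactSupport (fun y => (g y : ℂ)) := hs.comp_left Complex.ofReal_zero
  have hFi : ∀ n, Integrable (F n) := fun n => by
    refine Integrable.const_mul (Continuous.integrable_of_hasCompactSupport ?_ hgC.mul_right) _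
    have : Continuous fun y => (starRingEnd ℂ) (hhY y) := Complex.continuous_conj.comp hYc
    fun_prop
  have gi : Integrable g := hg.integrable_of_hasCompactSupport hs
  have hρ : R / |x| < 1 := by rw [div_lt_one hx0]; exact hx
  have hρ0 : 0 ≤ R / |x| := by positivity
  have hFn : ∀ n, ∫ y, ‖F n y‖ ≤ (((n : ℝ) + 1) * (R / |x|) ^ n) * (R ^ m * ∫ y, |g y|) := by
    intro n
    rw [← integral_const_mul, ← integral_const_mul]
    refine integral_mono (hFi n).norm ((gi.abs.const_mul _).const_mul _) fun y => ?_
    simp only [hF]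
    rcases eq_or_ne (g y) 0 with h0 | h0
    · simp [h0]
    · have := hR y h0
      rw [norm_mul, norm_mul, norm_mul, norm_pow, norm_pow, norm_div, norm_pow, Complex.norm_real,
        Complex.norm_real, RCLike.norm_conj, Real.norm_eq_abs, Real.norm_eq_abs]
      calc _ ≤ (((n : ℝ) + 1) / |x| ^ n) * (|g y| * (R ^ m * R ^ n)) := by
            gcongr; exact ha n
        _ = _ := by rw [div_pow]; ring
  have hsum : Summable fun n => ∫ y, ‖F n y‖ := by
    refine Summable.of_nonneg_of_le (fun n => integral_nonneg fun _ => norm_nonneg _) hFn ?_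
    refine Summable.mul_right _ ?_
    have h1 := summable_pow_mul_geometric_of_norm_lt_one 1 (r := R / |x|) (by
      rwa [Real.norm_of_nonneg hρ0])
    have h2 := summable_geometric_of_lt_one hρ0 hρ
    refine (h1.add h2).congr fun n => ?_
    ring
  have key := hasSum_integral_of_summable_integral_norm hFi hsum
  have key2 : HasSum (fun n => ∫ y, F n y) (∫ y, F m y) := by
    refine hasSum_single m fun n hn => ?_
    simp only [hF]
    rw [integral_const_mul, hh_moment hrot hn, mul_zero]
  have e := key.unique key2
  have e2 : ∀ y, ∑' n, F n y = (g y : ℂ) * ((starRingEnd ℂ (hhY y)) ^ m * ∑' n, a n * (hhY y / x) ^ n) := by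
    intro y
    rw [← tsum_mul_left, ← tsum_mul_left]
    congr 1; ext n
    simp only [hF]; rw [div_pow]; ring
  simp only [e2] at e
  rw [e]
  simp only [hF]
  rw [integral_const_mul]
  ring

lemma hh_int_aux {g : ℝ × ℝ → ℝ} (hg : Continuous g) (hs : HasCompactSupport g)
    {R x : ℝ} (hR : ∀ y, g y ≠ 0 → ‖hhY y‖ ≤ R) (hR0 : 0 ≤ R)
    (hx : R < |x|) (m j : ℕ) :
    Integrable (fun y => (g y : ℂ) * ((starRingEnd ℂ (hhY y)) ^ m * ((x - hhY y) ^ j)⁻¹)) := by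
  have gi : Integrable g := hg.integrable_of_hasCompactSupport hs
  have hYm : Measurable hhY := hh_Y_cont.measurable
  have hYcm : Measurable (fun y => (starRingEnd ℂ) (hhY y)) :=
    (Complex.continuous_conj.comp hh_Y_cont).measurable
  have hgm := hg.measurable
  refine (gi.norm.mul_const (R ^ m * ((|x| - R) ^ j)⁻¹)).mono' (Measurable.aestronglyMeasurable (by fun_prop))
    (Eventually.of_forall fun y => ?_)
  rcases eq_or_ne (g y) 0 with h0 | h0
  · simp [h0]
  · have h1 := hR y h0
    have h2 : |x| - R ≤ ‖(x : ℂ) - hhY y‖ := by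
      have := norm_sub_norm_le (x : ℂ) (hhY y)
      rw [Complex.norm_real, Real.norm_eq_abs] at this
      linarith
    have h3 : 0 < |x| - R := by linarith
    rw [norm_mul, norm_mul, norm_inv, norm_pow, norm_pow, RCLike.norm_conj, Complex.norm_real]
    gcongr

lemma hh_mean {g : ℝ × ℝ → ℝ} (hg : Continuous g) (hs : HasCompactSupport g)
    (hrot : ∀ α y, g (hhR α y) = g y) (h1 : ∫ y, g y = 1)
    (h2 : ∫ y : ℝ × ℝ, (y.1 ^ 2 + y.2 ^ 2) * g y = 0)
    {R x : ℝ} (hR : ∀ y, g y ≠ 0 → ‖hhY y‖ ≤ R) (hR0 : 0 ≤ R)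
    (hx : R < |x|) :
    x * (∫ y, g y * hhG 0 1 (x - y.1, -y.2)) = 1 ∧
    x * (∫ y, g y * hhG 1 (-1) (x - y.1, -y.2)) = 0 := by
  have hx0 : 0 < |x| := lt_of_le_of_lt hR0 hx
  have hxr : x ≠ 0 := abs_pos.mp hx0
  have hxc : (x : ℂ) ≠ 0 := by exact_mod_cast hxr
  have hne : ∀ y, g y ≠ 0 → ‖hhY y / x‖ < 1 := by
    intro y hy
    rw [norm_div, Complex.norm_real, Real.norm_eq_abs, div_lt_one hx0]
    exact (hR y hy).trans_lt hx
  have hwne : ∀ y, g y ≠ 0 → (x : ℂ) - hhY y ≠ 0 := by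
    intro y hy h
    have := hne y hy
    rw [← sub_eq_zero.mp h, div_self hxc] at this
    simp at this
  have geo : ∀ y, g y ≠ 0 → ∑' n : ℕ, (1 : ℂ) * (hhY y / x) ^ n = x * ((x - hhY y) ^ 1)⁻¹ := by
    intro y hy
    simp only [one_mul, pow_one]
    rw [tsum_geometric_of_norm_lt_one (hne y hy), one_sub_div hxc, inv_div, div_eq_mul_inv]
  have geo2 : ∀ y, g y ≠ 0 → ∑' n : ℕ, ((n : ℂ) + 1) * (hhY y / x) ^ n = x ^ 2 * ((x - hhY y) ^ 2)⁻¹ := by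
    intro y hy
    have s1 := hasSum_coe_mul_geometric_of_norm_lt_one (hne y hy)
    have s2 := hasSum_geometric_of_norm_lt_one (hne y hy)
    have s3 := (s1.add s2).tsum_eq
    have hw := hwne y hy
    rw [← show ∑' n : ℕ, ((n : ℂ) * (hhY y / x) ^ n + (hhY y / x) ^ n) =
      ∑' n : ℕ, ((n : ℂ) + 1) * (hhY y / x) ^ n by congr 1; ext n; ring]
    rw [s3, one_sub_div hxc]
    field_simp
    ring
  have m0 : ∫ y, (g y : ℂ) * ((starRingEnd ℂ (hhY y)) ^ 0 * hhY y ^ 0) = 1 := by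
    simp only [pow_zero, mul_one]
    exact (integral_ofReal (𝕜 := ℂ) (f := g) (μ := volume)).trans (by rw [h1]; simp)
  have m1 : ∫ y, (g y : ℂ) * ((starRingEnd ℂ (hhY y)) ^ 1 * hhY y ^ 1) = 0 := by
    have : ∀ y, (g y : ℂ) * ((starRingEnd ℂ (hhY y)) ^ 1 * hhY y ^ 1) =
        (((y.1 ^ 2 + y.2 ^ 2) * g y : ℝ) : ℂ) := by
      intro y
      rw [pow_one, pow_one, mul_comm (starRingEnd ℂ _), Complex.mul_conj, Complex.normSq_apply]
      simp only [hhY]; push_cast; ring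
    simp only [this]
    exact (integral_ofReal (𝕜 := ℂ) (f := fun y : ℝ × ℝ => (y.1 ^ 2 + y.2 ^ 2) * g y) (μ := volume)).trans (by rw [h2])
  have A : ∫ y, (g y : ℂ) * ((starRingEnd ℂ (hhY y)) ^ 0 * ((x - hhY y) ^ 1)⁻¹) = 1 / x := by
    have := hh_series hg hs hrot hR hR0 hx (fun _ => 1) (by intro n; simp) 0
    rw [m0] at this
    rw [eq_div_iff hxc, mul_comm, ← integral_const_mul]
    rw [show (1 : ℂ) = 1 * 1 / x ^ 0 by simp, ← this]
    congr 1; ext y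
    rcases eq_or_ne (g y) 0 with h0 | h0
    · simp [h0]
    · rw [geo y h0]; ring
  have hn1 : ∀ n : ℕ, ‖((n : ℂ) + 1)‖ ≤ (n : ℝ) + 1 := by
    intro n
    refine (norm_add_le _ _).trans ?_
    simp
  have B : ∫ y, (g y : ℂ) * ((starRingEnd ℂ (hhY y)) ^ 0 * ((x - hhY y) ^ 2)⁻¹) = 1 / x ^ 2 := by
    have := hh_series hg hs hrot hR hR0 hx (fun n => (n : ℂ) + 1) hn1 0
    rw [m0] at this
    rw [eq_div_iff (pow_ne_zero 2 hxc), mul_comm, ← integral_const_mul]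
    rw [show (1 : ℂ) = ((0 : ℕ) + 1) * 1 / x ^ 0 by simp, ← this]
    congr 1; ext y
    rcases eq_or_ne (g y) 0 with h0 | h0
    · simp [h0]
    · rw [geo2 y h0]; ring
  have D : ∫ y, (g y : ℂ) * ((starRingEnd ℂ (hhY y)) ^ 1 * ((x - hhY y) ^ 2)⁻¹) = 0 := by
    have := hh_series hg hs hrot hR hR0 hx (fun n => (n : ℂ) + 1) hn1 1
    rw [m1, mul_zero, zero_div] at this
    have h3 : (x : ℂ) ^ 2 * ∫ y, (g y : ℂ) * ((starRingEnd ℂ (hhY y)) ^ 1 * ((x - hhY y) ^ 2)⁻¹) = 0 := by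
      rw [← integral_const_mul, ← this]
      congr 1; ext y
      rcases eq_or_ne (g y) 0 with h0 | h0
      · simp [h0]
      · rw [geo2 y h0]; ring
    exact (mul_eq_zero.mp h3).resolve_left (pow_ne_zero 2 hxc)
  have iA := hh_int_aux hg hs hR hR0 hx 0 1
  have iB := hh_int_aux hg hs hR hR0 hx 0 2
  have iD := hh_int_aux hg hs hR hR0 hx 1 2
  have comb : ∀ (p q : ℝ), ∫ y, ((p : ℂ) * ((g y : ℂ) * ((starRingEnd ℂ (hhY y)) ^ 0 * ((x - hhY y) ^ 1)⁻¹)) +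
      ((q * x : ℂ) * ((g y : ℂ) * ((starRingEnd ℂ (hhY y)) ^ 0 * ((x - hhY y) ^ 2)⁻¹)) -
      (q : ℂ) * ((g y : ℂ) * ((starRingEnd ℂ (hhY y)) ^ 1 * ((x - hhY y) ^ 2)⁻¹)))) = (((p + q) / x : ℝ) : ℂ) := by
    intro p q
    have e1 := integral_sub (iB.const_mul (q * x : ℂ)) (iD.const_mul (q : ℂ))
    have e2 := integral_add (iA.const_mul (p : ℂ)) ((iB.const_mul (q * x : ℂ)).sub (iD.const_mul (q : ℂ)))
    simp only [Pi.sub_apply] at e2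
    rw [e2, e1, integral_const_mul, integral_const_mul, integral_const_mul, A, B, D]
    push_cast
    field_simp
    simp
  have combR : ∀ (p q : ℝ), ∫ y, g y * (((p : ℂ) / (x - hhY y) + q * (starRingEnd ℂ (x - hhY y)) / (x - hhY y) ^ 2).re)
      = (p + q) / x := by
    intro p q
    have e := congrArg Complex.re (comb p q)
    rw [Complex.ofReal_re] at e
    rw [← e]
    have ii := (iA.const_mul (p : ℂ)).add ((iB.const_mul (q * x : ℂ)).sub (iD.const_mul (q : ℂ)))
    refine Eq.trans ?_ (integral_re ii)
    congr 1; ext y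
    simp only [Pi.add_apply, Pi.sub_apply]
    rw [← Complex.re_ofReal_mul]
    rw [RCLike.re_eq_complex_re]
    congr 1
    rw [map_sub, Complex.conj_ofReal]
    simp only [pow_zero, pow_one, div_eq_mul_inv]
    ring
  have ptw : ∀ y, ∀ p q : ℝ, g y ≠ 0 → (((p : ℂ) / (x - hhY y) + q * (starRingEnd ℂ (x - hhY y)) / (x - hhY y) ^ 2).re) =
      (p * (x - y.1) * ((x - y.1) ^ 2 + (-y.2) ^ 2) +
        q * ((x - y.1) ^ 3 - 3 * (x - y.1) * (-y.2) ^ 2)) / ((x - y.1) ^ 2 + (-y.2) ^ 2) ^ 2 := by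
    intro y p q hy
    have hw := hwne y hy
    have hw' : starRingEnd ℂ ((x : ℂ) - hhY y) ≠ 0 := (map_ne_zero _).mpr hw
    have hn : ((((x - y.1) ^ 2 + (-y.2) ^ 2 : ℝ)) : ℂ) = (x - hhY y) * starRingEnd ℂ ((x : ℂ) - hhY y) := by
      rw [Complex.mul_conj, Complex.normSq_apply]
      simp [hhY]; ring
    have : ((p : ℂ) / (x - hhY y) + q * (starRingEnd ℂ (x - hhY y)) / (x - hhY y) ^ 2) =
        (p * starRingEnd ℂ ((x : ℂ) - hhY y) * ((((x - y.1) ^ 2 + (-y.2) ^ 2 : ℝ)) : ℂ) +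
          q * starRingEnd ℂ ((x : ℂ) - hhY y) ^ 3) / (((((x - y.1) ^ 2 + (-y.2) ^ 2) ^ 2 : ℝ)) : ℂ) := by
      rw [Complex.ofReal_pow, hn]
      field_simp
    rw [this, Complex.div_ofReal_re]
    congr 1
    have hw3 : (starRingEnd ℂ) ((x : ℂ) - hhY y) = ⟨x - y.1, y.2⟩ := by
      apply Complex.ext <;> simp [hhY]
    rw [hw3]
    simp only [pow_succ, pow_zero, one_mul, Complex.add_re, Complex.mul_re, Complex.mul_im, Complex.ofReal_re, Complex.ofReal_im]
    ring
  constructor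
  · have := combR (1 / 2) (1 / 2)
    rw [show ∫ y, g y * hhG 0 1 (x - y.1, -y.2) = (1 / 2 + 1 / 2) / x from ?_]
    · field_simp; norm_num
    rw [← this]
    congr 1; ext y
    rcases eq_or_ne (g y) 0 with h0 | h0
    · simp [h0]
    rw [ptw y _ _ h0]
    unfold hhG
    congr 2
    simp only
    ring
  · have := combR 1 (-1)
    rw [show ∫ y, g y * hhG 1 (-1) (x - y.1, -y.2) = (1 + -1) / x from ?_]
    · norm_num
    rw [← this]
    congr 1; ext y
    rcases eq_or_ne (g y) 0 with h0 | h0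
    · simp [h0]
    rw [ptw y _ _ h0]
    unfold hhG
    congr 2
    simp only
    ring

lemma hh_G_loc (a b : ℝ) : LocallyIntegrable (hhG a b) := by
  have hm : Measurable (hhG a b) := by unfold hhG; fun_prop
  have h : Integrable (fun z : ℝ × ℝ => (1 + z.1 ^ 2)⁻¹ * hhG a b z) := by
    refine (hh_weight_integrable.const_mul (5 * |a| + 3 * |b|)).mono'
      (Measurable.aestronglyMeasurable (by fun_prop)) (Eventually.of_forall fun z => ?_)
    rw [norm_mul, Real.norm_of_nonneg (by positivity), Real.norm_eq_abs]
    calc _ ≤ (1 + z.1 ^ 2)⁻¹ * ((5 * |a| + 3 * |b|) * (|z.1| / (z.1 ^ 2 + z.2 ^ 2))) := by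
          gcongr; exact hh_G_bound a b z
      _ = _ := by ring
  have h2 := h.locallyIntegrable.continuous_mul (g := fun z : ℝ × ℝ => 1 + z.1 ^ 2) (by fun_prop)
  convert! h2 using 1
  ext z
  have : 1 + z.1 ^ 2 ≠ 0 := by positivity
  field_simp

lemma hh_smooth {g : ℝ × ℝ → ℝ} (hg : ContDiff ℝ (⊤ : ℕ∞) g) (hs : HasCompactSupport g) (a b : ℝ) :
    ContDiff ℝ (⊤ : ℕ∞) (fun x : ℝ => ∫ y, g y * hhG a b (x - y.1, -y.2)) := by
  have h := hs.contDiff_convolution_left (ContinuousLinearMap.mul ℝ ℝ) (μ := volume) hg (hh_G_loc a b)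
  have h2 := h.comp (contDiff_id.prodMk contDiff_const : ContDiff ℝ (⊤ : ℕ∞) (fun x : ℝ => (x, (0 : ℝ))))
  convert! h2 using 1
  ext x
  simp only [convolution, Function.comp, id, ContinuousLinearMap.mul_apply']
  congr 1; ext t
  rw [show ((x, 0) : ℝ × ℝ) - t = (x - t.1, -t.2) by ext <;> simp]

lemma hh_final {F : ℝ → ℂ} (hF : ContDiff ℝ (⊤ : ℕ∞) F) {R : ℝ} (h0 : ∀ x, R < |x| → F x = 0)
    (k : ℕ) : ∃ C : ℝ, ∀ x, ‖iteratedDeriv k F x‖ ≤ C / (1 + x ^ 4) := by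
  have hz : ∀ x, R < |x| → iteratedDeriv k F x = 0 := by
    intro x hx
    have : F =ᶠ[𝓝 x] fun _ => 0 := by
      filter_upwards [(isOpen_lt continuous_const continuous_abs).mem_nhds hx] with y hy using h0 y hy
    rw [this.iteratedDeriv_eq]
    simp
  have hc : Continuous (iteratedDeriv k F) := hF.continuous_iteratedDeriv k (by exact_mod_cast le_top)
  have hcs : HasCompactSupport (fun x : ℝ => ((1 + x ^ 4 : ℝ) : ℂ) * iteratedDeriv k F x) := by
    refine HasCompactSupport.intro (isCompact_Icc (a := -R) (b := R)) fun x hx => ?_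
    rw [hz x, mul_zero]
    by_contra h
    exact hx (abs_le.mp (not_lt.mp h))
  obtain ⟨C, hC⟩ := Continuous.bounded_above_of_compact_support (by fun_prop) hcs
  refine ⟨C, fun x => ?_⟩
  have := hC x
  rw [norm_mul, Complex.norm_real, Real.norm_of_nonneg (by positivity)] at this
  rw [le_div_iff₀ (by positivity)]
  linarith

/-- Improved decay of `f₂` and `f₃` when the second moment
`m₂ = ∫ |x|² (ϕ∗ϕ)(x) dx` vanishes. -/
theorem statement8 (ϕ : ℝ × ℝ → ℝ)
    (hsmooth : ContDiff ℝ (⊤ : ℕ∞) ϕ)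
    (hsupp : HasCompactSupport ϕ)
    (hradial : ∀ x y : ℝ × ℝ, x.1 ^ 2 + x.2 ^ 2 = y.1 ^ 2 + y.2 ^ 2 → ϕ x = ϕ y)
    (hnorm : (∫ x : ℝ × ℝ, ϕ x) = 1)
    (hm2 : m2 ϕ = 0) :
    ∃ C : ℝ, 0 < C ∧
      ∀ k : ℕ, k ≤ 2 → ∀ x : ℝ,
        ‖iteratedDeriv k (f2 ϕ) x‖ + ‖iteratedDeriv k (f3 ϕ) x‖
          ≤ C / (1 + x ^ 4) := by
  set g : ℝ × ℝ → ℝ := conv2 ϕ with hgdef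
  have hconv : g = convolution ϕ ϕ (ContinuousLinearMap.mul ℝ ℝ) volume := rfl
  have hϕi : Integrable ϕ := hsmooth.continuous.integrable_of_hasCompactSupport hsupp
  have hg : ContDiff ℝ (⊤ : ℕ∞) g := by
    rw [hconv]
    exact hsupp.contDiff_convolution_left _ hsmooth hϕi.locallyIntegrable
  have hs : HasCompactSupport g := by
    rw [hconv]; exact hsupp.convolution _ hsupp
  have h1 : ∫ y, g y = 1 := by
    rw [hconv, integral_convolution _ hϕi hϕi, hnorm]; simp
  have hϕrot : ∀ α y, ϕ (hhR α y) = ϕ y := by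
    intro α y
    apply hradial
    simp only [hhR]
    linear_combination (y.1 ^ 2 + y.2 ^ 2) * Real.sin_sq_add_cos_sq α
  have hrot : ∀ α y, g (hhR α y) = g y := by
    intro α x
    simp only [hgdef, conv2]
    rw [← hh_rot α]
    congr 1; ext y
    rw [hϕrot, show hhR α x - hhR α y = hhR α (x - y) by
      ext <;> simp [hhR] <;> ring, hϕrot]
  obtain ⟨R, hRK⟩ := hs.isCompact.exists_bound_of_continuousOn hh_Y_cont.continuousOn
  have hR : ∀ y, g y ≠ 0 → ‖hhY y‖ ≤ max R 0 := fun y hy =>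
    (hRK y (subset_tsupport _ hy)).trans (le_max_left _ _)
  have hmean : ∀ x : ℝ, max R 0 < |x| → _ := fun x hx =>
    hh_mean hg.continuous hs hrot h1 hm2 hR (le_max_right _ _) hx
  have e1 : ∀ x, f1 ϕ x = ((x * ∫ y, g y * hhG 0 1 (x - y.1, -y.2) : ℝ) : ℂ) := by
    intro x
    have := hh_main hg hs 0 1 x
    simp only [Complex.ofReal_zero, Complex.ofReal_one, zero_mul, one_mul, zero_add] at this
    unfold f1
    rw [this, ← Complex.ofReal_mul]
    congr 1
    field_simp
  have e2 : ∀ x, f2 ϕ x = ((x * ∫ y, g y * hhG 1 (-1) (x - y.1, -y.2) : ℝ) : ℂ) := by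
    intro x
    have := hh_main hg hs 1 (-1) x
    simp only [Complex.ofReal_neg, Complex.ofReal_one, neg_mul, one_mul, ← sub_eq_add_neg] at this
    unfold f2
    simp only [neg_mul]
    rw [this, ← Complex.ofReal_mul]
    congr 1
    field_simp
  have s2 : ContDiff ℝ (⊤ : ℕ∞) (f2 ϕ) := by
    rw [show f2 ϕ = _ from funext e2]
    exact Complex.ofRealCLM.contDiff.comp (contDiff_id.mul (hh_smooth hg hs 1 (-1)))
  have s3 : ContDiff ℝ (⊤ : ℕ∞) (f3 ϕ) := by
    unfold f3
    simp only [e1]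
    exact (Complex.ofRealCLM.contDiff.comp (contDiff_id.mul (hh_smooth hg hs 0 1))).sub contDiff_const
  have z2 : ∀ x, max R 0 < |x| → f2 ϕ x = 0 := by
    intro x hx
    rw [e2, (hmean x hx).2]; simp
  have z3 : ∀ x, max R 0 < |x| → f3 ϕ x = 0 := by
    intro x hx
    unfold f3
    rw [e1, (hmean x hx).1]; simp
  choose C2 hC2 using hh_final s2 z2
  choose C3 hC3 using hh_final s3 z3
  refine ⟨∑ k ∈ Finset.range 3, (|C2 k| + |C3 k|) + 1, by positivity, fun k hk x => ?_⟩
  have hx : 0 < 1 + x ^ 4 := by positivity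
  refine (add_le_add (hC2 k x) (hC3 k x)).trans ?_
  rw [← add_div]
  refine div_le_div_of_nonneg_right ?_ hx.le
  have := Finset.single_le_sum (f := fun k => |C2 k| + |C3 k|) (s := Finset.range 3)
    (fun i _ => by positivity) (Finset.mem_range.mpr (by omega : k < 3))
  linarith [le_abs_self (C2 k), le_abs_self (C3 k)]
end
end

section
/- Let ϕ, φ, φ̂, f₂, f₃, m₁ be as in the context. Then f₂ and f₃ are (absolutely) integrable over ℝ, and ∫_ℝ f₂(x) dx = 4 m₁ and ∫_ℝ f₃(x) dx = −4 m₁. -/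
open MeasureTheory Real Filter Topology
open scoped ENNReal

noncomputable section

def rotE (θ : ℝ) : ℝ × ℝ ≃ᵐ ℝ × ℝ :=
  (Complex.measurableEquivRealProd.symm.trans
    ((rotation (Circle.exp θ)).toHomeomorph.toMeasurableEquiv)).trans Complex.measurableEquivRealProd

lemma rotE_apply (θ : ℝ) (y : ℝ × ℝ) :
    rotE θ y = (cos θ * y.1 - sin θ * y.2, cos θ * y.2 + sin θ * y.1) := by
  have h : (Circle.exp θ : ℂ) = (cos θ : ℂ) + (sin θ : ℂ) * Complex.I := by
    rw [Circle.coe_exp, Complex.exp_mul_I]; simp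
  have : rotE θ y = (((Circle.exp θ : ℂ) * (⟨y.1, y.2⟩ : ℂ)).re,
    ((Circle.exp θ : ℂ) * (⟨y.1, y.2⟩ : ℂ)).im) := rfl
  rw [this, h]
  simp [Complex.cos_ofReal_re, Complex.sin_ofReal_re]

lemma rotE_mp (θ : ℝ) : MeasurePreserving (rotE θ) := by
  have h1 := Complex.volume_preserving_equiv_real_prod
  have h2 : MeasurePreserving (rotation (Circle.exp θ)) :=
    (rotation (Circle.exp θ)).measurePreserving
  exact (h1.comp h2).comp (h1.symm)

lemma rotE_integral {E : Type*} [NormedAddCommGroup E] [NormedSpace ℝ E] (θ : ℝ) (F : ℝ × ℝ → E) :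
    ∫ y, F (rotE θ y) = ∫ y, F y :=
  (rotE_mp θ).integral_comp (rotE θ).measurableEmbedding F

lemma rotE_normsq (θ : ℝ) (y : ℝ × ℝ) :
    (rotE θ y).1 ^ 2 + (rotE θ y).2 ^ 2 = y.1 ^ 2 + y.2 ^ 2 := by
  rw [rotE_apply]
  linear_combination (y.1 ^ 2 + y.2 ^ 2) * (sin_sq_add_cos_sq θ)

def IsRad (g : ℝ × ℝ → ℝ) : Prop :=
  ∀ x y : ℝ × ℝ, x.1 ^ 2 + x.2 ^ 2 = y.1 ^ 2 + y.2 ^ 2 → g x = g y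

lemma exists_polar (x : ℝ × ℝ) : ∃ θ : ℝ, x = rotE θ (√(x.1 ^ 2 + x.2 ^ 2), 0) := by
  refine ⟨Complex.arg ⟨x.1, x.2⟩, ?_⟩
  have h := Complex.norm_mul_cos_arg ⟨x.1, x.2⟩
  have h' := Complex.norm_mul_sin_arg ⟨x.1, x.2⟩
  have hn : ‖(⟨x.1, x.2⟩ : ℂ)‖ = √(x.1 ^ 2 + x.2 ^ 2) := by
    rw [Complex.norm_eq_sqrt_sq_add_sq]
  rw [hn] at h h'
  simp only at h h'
  rw [rotE_apply]
  ext <;> simp <;> linarith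

lemma ft2_rot (g : ℝ × ℝ → ℝ) (hg : IsRad g) (θ : ℝ) (ξ : ℝ × ℝ) :
    ft2 g (rotE θ ξ) = ft2 g ξ := by
  unfold ft2
  rw [← rotE_integral θ]
  congr 1; ext y
  rw [hg _ _ (rotE_normsq θ y)]
  congr 2
  simp only [rotE_apply]
  have := congrArg (Complex.ofReal) (sin_sq_add_cos_sq θ)
  push_cast at this ⊢
  linear_combination (-Complex.I * (y.1 * ξ.1 + y.2 * ξ.2)) * this

lemma ft2_rad (g : ℝ × ℝ → ℝ) (hg : IsRad g) (ρ θ : ℝ) :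
    ft2 g (ρ * cos θ, ρ * sin θ) = ft2 g (ρ, 0) := by
  rw [← ft2_rot g hg θ (ρ, 0), rotE_apply]
  congr 1; ext <;> simp <;> ring

lemma conv2_rad (ϕ : ℝ × ℝ → ℝ) (hg : IsRad ϕ) : IsRad (conv2 ϕ) := by
  have key : ∀ θ x, conv2 ϕ (rotE θ x) = conv2 ϕ x := by
    intro θ x
    unfold conv2
    rw [← rotE_integral θ]
    congr 1; ext y
    rw [hg _ _ (rotE_normsq θ y)]
    congr 1
    have : rotE θ x - rotE θ y = rotE θ (x - y) := by
      simp only [rotE_apply]; ext <;> simp <;> ring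
    rw [this, hg _ _ (rotE_normsq θ (x - y))]
  intro x y hxy
  obtain ⟨a, ha⟩ := exists_polar x
  obtain ⟨b, hb⟩ := exists_polar y
  rw [ha, hb, key, key, hxy]

lemma conv2_eq (ϕ : ℝ × ℝ → ℝ) :
    conv2 ϕ = MeasureTheory.convolution ϕ ϕ (ContinuousLinearMap.lsmul ℝ ℝ) volume := by
  ext x; simp [conv2, MeasureTheory.convolution]

lemma conv2_props (ϕ : ℝ × ℝ → ℝ)
    (hsmooth : ContDiff ℝ (⊤ : ℕ∞) ϕ)
    (hsupp : HasCompactSupport ϕ)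
    (hnorm : (∫ x : ℝ × ℝ, ϕ x) = 1) :
    ContDiff ℝ (⊤ : ℕ∞) (conv2 ϕ) ∧ HasCompactSupport (conv2 ϕ) ∧ ∫ x, conv2 ϕ x = 1 := by
  have hi : Integrable ϕ := hsmooth.continuous.integrable_of_hasCompactSupport hsupp
  rw [conv2_eq]
  refine ⟨hsupp.contDiff_convolution_right _ hi.locallyIntegrable hsmooth,
    hsupp.convolution _ hsupp, ?_⟩
  rw [MeasureTheory.integral_convolution _ hi hi]
  simp [hnorm]

open scoped FourierTransform

def toC (g : ℝ × ℝ → ℝ) (z : ℂ) : ℂ := (g (z.re, z.im) : ℂ)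

lemma ft2_eq (g : ℝ × ℝ → ℝ) (w : ℂ) :
    𝓕 (toC g) w = ft2 g (2 * π * w.re, 2 * π * w.im) := by
  rw [Real.fourier_eq', ft2,
    ← Complex.volume_preserving_equiv_real_prod.integral_comp
      Complex.measurableEquivRealProd.measurableEmbedding]
  congr 1; ext z
  simp only [Complex.measurableEquivRealProd_apply, toC, smul_eq_mul]
  rw [mul_comm]
  congr 2
  rw [Complex.inner]
  simp
  ring

lemma ft2_eq' (g : ℝ × ℝ → ℝ) (ξ : ℝ × ℝ) :
    ft2 g ξ = 𝓕 (toC g) ⟨ξ.1 / (2 * π), ξ.2 / (2 * π)⟩ := by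
  rw [ft2_eq]
  congr 1; ext <;> simp <;> field_simp

lemma toC_schwartz (g : ℝ × ℝ → ℝ) (h1 : ContDiff ℝ (⊤ : ℕ∞) g) (h2 : HasCompactSupport g) :
    ∃ S : SchwartzMap ℂ ℂ, (S : ℂ → ℂ) = toC g := by
  have a : ContDiff ℝ (⊤ : ℕ∞) (toC g) := by
    have : ContDiff ℝ (⊤ : ℕ∞) (fun z : ℂ => (z.re, z.im)) :=
      (Complex.reCLM.contDiff).prodMk (Complex.imCLM.contDiff)
    exact Complex.ofRealCLM.contDiff.comp (h1.comp this)
  have b : HasCompactSupport (toC g) := by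
    have : HasCompactSupport (g ∘ Complex.equivRealProdCLM.toHomeomorph) :=
      h2.comp_homeomorph _
    exact this.comp_left (g := Complex.ofReal) rfl
  exact ⟨b.toSchwartzMap a, by rfl⟩

lemma ft2_decay (g : ℝ × ℝ → ℝ) (h1 : ContDiff ℝ (⊤ : ℕ∞) g) (h2 : HasCompactSupport g) :
    Continuous (ft2 g) ∧ Integrable (fun ρ : ℝ => ft2 g (ρ, 0)) ∧
      Integrable (fun ρ : ℝ => (ρ : ℂ) * ft2 g (ρ, 0)) := by
  obtain ⟨S, hS⟩ := toC_schwartz g h1 h2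
  have hF : ∀ w, 𝓕 (toC g) w = (𝓕 S : SchwartzMap ℂ ℂ) w := by
    intro w; rw [← hS]; rfl
  have hc : Continuous (ft2 g) := by
    have : ft2 g = fun ξ => (𝓕 S : SchwartzMap ℂ ℂ) ⟨ξ.1 / (2 * π), ξ.2 / (2 * π)⟩ := by
      ext ξ; rw [ft2_eq', hF]
    rw [this]
    apply (𝓕 S : SchwartzMap ℂ ℂ).continuous.comp
    have : (fun ξ : ℝ × ℝ => (⟨ξ.1 / (2 * π), ξ.2 / (2 * π)⟩ : ℂ)) =
      fun ξ : ℝ × ℝ => ((ξ.1 / (2 * π) : ℝ) : ℂ) + ((ξ.2 / (2 * π) : ℝ) : ℂ) * Complex.I := by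
      ext ξ; rw [Complex.mk_eq_add_mul_I]
    rw [this]; fun_prop
  have hc1 : Continuous (fun ρ : ℝ => ft2 g (ρ, 0)) := hc.comp (by fun_prop)
  have bd : ∀ k : ℕ, ∃ C, ∀ ρ : ℝ, |ρ| ^ k * ‖ft2 g (ρ, 0)‖ ≤ C := by
    intro k
    obtain ⟨C, hC⟩ := (𝓕 S : SchwartzMap ℂ ℂ).decay k 0
    refine ⟨(2 * π) ^ k * C, fun ρ => ?_⟩
    have := hC.2 ⟨ρ / (2 * π), 0 / (2 * π)⟩
    rw [norm_iteratedFDeriv_zero, ← hF, ← ft2_eq' g (ρ, 0)] at this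
    have hn : ‖(⟨ρ / (2 * π), 0 / (2 * π)⟩ : ℂ)‖ = |ρ| / (2 * π) := by
      rw [zero_div, show (⟨ρ / (2 * π), 0⟩ : ℂ) = ((ρ / (2 * π) : ℝ) : ℂ) from rfl,
        Complex.norm_real, norm_div, Real.norm_eq_abs, Real.norm_of_nonneg (by positivity)]
    rw [hn, div_pow] at this
    have hp : (0:ℝ) < (2 * π) ^ k := by positivity
    calc |ρ| ^ k * ‖ft2 g (ρ, 0)‖ = (2 * π) ^ k * (|ρ| ^ k / (2 * π) ^ k * ‖ft2 g (ρ, 0)‖) := by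
          field_simp
      _ ≤ _ := by gcongr
  obtain ⟨C0, h0⟩ := bd 0
  obtain ⟨C1, h1⟩ := bd 1
  obtain ⟨C2, h2⟩ := bd 2
  obtain ⟨C3, h3⟩ := bd 3
  refine ⟨hc, ?_, ?_⟩
  · refine ((integrable_inv_one_add_sq).const_mul (C0 + C2)).mono' hc1.aestronglyMeasurable
      (Eventually.of_forall fun ρ => ?_)
    have a := h0 ρ; have b := h2 ρ
    rw [sq_abs] at b
    rw [← div_eq_mul_inv, le_div_iff₀ (by positivity)]
    simp at a; linarith
  · refine ((integrable_inv_one_add_sq).const_mul (C1 + C3)).mono'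
      (by fun_prop) (Eventually.of_forall fun ρ => ?_)
    have a := h1 ρ; have b := h3 ρ
    rw [pow_succ, sq_abs] at b
    rw [← div_eq_mul_inv, le_div_iff₀ (by positivity), norm_mul, Complex.norm_real,
      Real.norm_eq_abs]
    simp at a; nlinarith

lemma parseval (g : ℝ × ℝ → ℝ) (h1 : ContDiff ℝ (⊤ : ℕ∞) g) (h2 : HasCompactSupport g)
    (h : ℝ × ℝ → ℝ) (hh : Integrable h) (hev : ∀ y, h (-y) = h y) :
    ∫ η, ft2 g η * ft2 h η = ((4 * π ^ 2 * ∫ y, g y * h y : ℝ) : ℂ) := by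
  obtain ⟨S, hS⟩ := toC_schwartz g h1 h2
  have hF : 𝓕 (toC g) = (𝓕 S : SchwartzMap ℂ ℂ) := by
    rw [← hS]; rfl
  have e1 : ∀ F : ℝ × ℝ → ℂ, ∫ z : ℂ, F (z.re, z.im) = ∫ y, F y := fun F =>
    Complex.volume_preserving_equiv_real_prod.integral_comp
      Complex.measurableEquivRealProd.measurableEmbedding F
  have hhC : Integrable (toC h) := by
    have := (Complex.volume_preserving_equiv_real_prod.integrable_comp_emb
      Complex.measurableEquivRealProd.measurableEmbedding (g := fun y => (h y : ℂ))).2 hh.ofReal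
    exact this
  have hgi : Integrable (toC g) := by rw [← hS]; exact S.integrable
  have hFi : Integrable (𝓕 (toC g)) := by rw [hF]; exact (𝓕 S : SchwartzMap ℂ ℂ).integrable
  have inv : 𝓕⁻ (𝓕 (toC g)) = toC g :=
    Continuous.fourierInv_fourier_eq (by rw [← hS]; exact S.continuous) hgi hFi
  have flip : ∫ ξ, 𝓕 (toC h) ξ • 𝓕 (toC g) ξ = ∫ x, toC h x • 𝓕 (𝓕 (toC g)) x := by
    have := VectorFourier.integral_fourierIntegral_smul_eq_flip (L := innerₗ ℂ)
      Real.continuous_fourierChar continuous_inner hhC hFi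
    rw [flip_innerₗ] at this
    exact this
  have r1 : ∫ x, toC h x • 𝓕 (𝓕 (toC g)) x = ((∫ y, g y * h y : ℝ) : ℂ) := by
    have : ∀ x, toC h x • 𝓕 (𝓕 (toC g)) x = (fun z => toC g z * toC h z) (-x) := by
      intro x
      have hx : 𝓕 (𝓕 (toC g)) x = toC g (-x) := by
        rw [← inv, Real.fourierInv_eq_fourier_neg, neg_neg, inv]
      have hx2 : toC h (-x) = toC h x := by
        have := hev (x.re, x.im)
        simp only [toC]
        rw [← this]; rfl
      simp only [hx, hx2, smul_eq_mul, mul_comm]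
    rw [integral_congr_ae (Eventually.of_forall this), integral_neg_eq_self (fun z => toC g z * toC h z) volume]
    rw [← integral_complex_ofReal, ← e1]
    congr 1; ext z; simp [toC]
  have l1 : ∫ ξ, 𝓕 (toC h) ξ • 𝓕 (toC g) ξ
      = ((4 * π ^ 2 : ℝ) : ℂ)⁻¹ * ∫ η, ft2 g η * ft2 h η := by
    have := Measure.integral_comp_smul (volume : Measure (ℝ × ℝ))
      (fun η => ft2 g η * ft2 h η) (2 * π)
    rw [← e1] at this
    have e3 : ∫ ξ, 𝓕 (toC h) ξ • 𝓕 (toC g) ξ = ∫ (z : ℂ), ft2 g ((2 * π) • (z.re, z.im))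
        * ft2 h ((2 * π) • (z.re, z.im)) := by
      congr 1; ext z
      rw [ft2_eq, ft2_eq, smul_eq_mul, mul_comm]; rfl
    rw [e3, this]
    rw [Module.finrank_prod, Module.finrank_self, abs_of_nonneg (by positivity), Complex.real_smul]
    congr 1
    push_cast
    ring
  rw [l1, r1] at flip
  have hp : ((4 * π ^ 2 : ℝ) : ℂ) ≠ 0 := by
    exact_mod_cast (by positivity : (4 * π ^ 2 : ℝ) ≠ 0)
  rw [Complex.ofReal_mul, ← flip]
  field_simp

def Ang (a b t θ : ℝ) : ℂ :=
  Complex.exp (Complex.I * (t * cos θ : ℝ)) *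
    (-Complex.I * ((cos θ * (a * cos θ ^ 2 + b * sin θ ^ 2) : ℝ) : ℂ))

lemma Ang_cont (a b : ℝ) : Continuous (fun p : ℝ × ℝ => Ang a b p.1 p.2) := by
  unfold Ang; fun_prop

lemma Ang_bound (a b t θ : ℝ) : ‖Ang a b t θ‖ ≤ |a| + |b| := by
  unfold Ang
  rw [norm_mul, mul_comm Complex.I, Complex.norm_exp_ofReal_mul_I, one_mul, norm_mul, norm_neg,
    Complex.norm_I, one_mul, Complex.norm_real, norm_mul]
  have h1 : ‖cos θ‖ ≤ 1 := abs_cos_le_one θ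
  have h2 : ‖a * cos θ ^ 2 + b * sin θ ^ 2‖ ≤ |a| + |b| := by
    refine (norm_add_le _ _).trans ?_
    rw [norm_mul, norm_mul, Real.norm_eq_abs, Real.norm_eq_abs, Real.norm_eq_abs,
      Real.norm_eq_abs, abs_of_nonneg (sq_nonneg (cos θ)), abs_of_nonneg (sq_nonneg (sin θ))]
    have := cos_sq_le_one θ
    have := sin_sq_le_one θ
    nlinarith [abs_nonneg a, abs_nonneg b]
  calc _ ≤ 1 * (|a| + |b|) := by gcongr
    _ = _ := one_mul _

lemma prod_set_integral (g : ℝ → ℂ) (hg : Integrable g) (k : ℝ × ℝ → ℂ) (hk : Continuous k) (C : ℝ)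
    (hC : ∀ p, ‖k p‖ ≤ C) :
    ∫ p in Set.Ioi (0:ℝ) ×ˢ Set.Ioo (-π) π, g p.1 * k p =
      ∫ ρ in Set.Ioi (0:ℝ), g ρ * ∫ θ in (-π)..π, k (ρ, θ) := by
  have hi : IntegrableOn (fun p : ℝ × ℝ => g p.1 * k p) (Set.Ioi (0:ℝ) ×ˢ Set.Ioo (-π) π)
      (volume.prod volume) := by
    rw [IntegrableOn, ← Measure.prod_restrict]
    have h1 : Integrable (fun p : ℝ × ℝ => g p.1 * (1:ℂ))
      ((volume.restrict (Set.Ioi (0:ℝ))).prod (volume.restrict (Set.Ioo (-π) π))) :=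
      Integrable.mul_prod hg.integrableOn (integrable_const _)
    simp only [mul_one] at h1
    exact h1.mul_bdd hk.aestronglyMeasurable (Eventually.of_forall hC)
  rw [Measure.volume_eq_prod, setIntegral_prod _ hi]
  congr 1; ext ρ
  simp only []
  rw [integral_const_mul, intervalIntegral.integral_of_le (by linarith [pi_pos]),
    integral_Ioc_eq_integral_Ioo]

lemma polar_sym (g : ℝ × ℝ → ℝ) (h1 : ContDiff ℝ (⊤ : ℕ∞) g) (h2 : HasCompactSupport g)
    (hr : IsRad g) (a b x : ℝ) :
    ∫ η : ℝ × ℝ, Complex.exp (Complex.I * (x : ℂ) * (η.1 : ℂ)) *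
      (-Complex.I * (η.1 : ℂ) * (a * (η.1 : ℂ) ^ 2 + b * (η.2 : ℂ) ^ 2) /
        ((η.1 : ℂ) ^ 2 + (η.2 : ℂ) ^ 2) ^ 2) * ft2 g η =
    ∫ ρ in Set.Ioi (0:ℝ), ft2 g (ρ, 0) * ∫ θ in (-π)..π, Ang a b (x * ρ) θ := by
  obtain ⟨-, hi, -⟩ := ft2_decay g h1 h2
  rw [← prod_set_integral (fun ρ => ft2 g (ρ, 0)) hi (fun p => Ang a b (x * p.1) p.2)
    ((Ang_cont a b).comp (by fun_prop : Continuous fun p : ℝ × ℝ => (x * p.1, p.2))) (|a| + |b|)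
    (fun p => Ang_bound _ _ _ _), ← integral_comp_polarCoord_symm, polarCoord_target]
  apply setIntegral_congr_fun (measurableSet_Ioi.prod measurableSet_Ioo)
  rintro ⟨ρ, θ⟩ ⟨hρ, -⟩
  have hρ : (0:ℝ) < ρ := hρ
  simp only [polarCoord_symm_apply, ft2_rad g hr]
  have hs : ((ρ * cos θ : ℝ) : ℂ) ^ 2 + ((ρ * sin θ : ℝ) : ℂ) ^ 2 = (ρ : ℂ) ^ 2 := by
    have : (ρ * cos θ) ^ 2 + (ρ * sin θ) ^ 2 = ρ ^ 2 := by
      linear_combination ρ ^ 2 * (sin_sq_add_cos_sq θ)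
    exact_mod_cast this
  have hρ' : (ρ : ℂ) ≠ 0 := by exact_mod_cast hρ.ne'
  rw [hs, Complex.real_smul, Ang]
  rw [show Complex.I * (x:ℂ) * ((ρ * cos θ : ℝ) : ℂ) = Complex.I * ((x * ρ * cos θ : ℝ) : ℂ) by
    push_cast; ring]
  generalize Complex.exp (Complex.I * ((x * ρ * cos θ : ℝ) : ℂ)) = E
  push_cast
  field_simp

lemma ft2_bound (h : ℝ × ℝ → ℝ) (ξ : ℝ × ℝ) : ‖ft2 h ξ‖ ≤ ∫ y, ‖h y‖ := by
  unfold ft2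
  refine (norm_integral_le_integral_norm _).trans (le_of_eq ?_)
  congr 1; ext y
  rw [norm_mul, Complex.norm_real]
  rw [show -Complex.I * ((y.1 : ℂ) * (ξ.1 : ℂ) + (y.2 : ℂ) * (ξ.2 : ℂ)) =
    ((-(y.1 * ξ.1 + y.2 * ξ.2) : ℝ) : ℂ) * Complex.I by push_cast; ring,
    Complex.norm_exp_ofReal_mul_I, mul_one]

lemma ft2_cont (h : ℝ × ℝ → ℝ) (hh : Integrable h) : Continuous (ft2 h) := by
  unfold ft2
  refine continuous_of_dominated (bound := fun y => ‖h y‖) ?_ ?_ hh.norm ?_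
  · intro ξ
    exact hh.ofReal.aestronglyMeasurable.mul (Continuous.aestronglyMeasurable (by fun_prop))
  · intro ξ
    refine Eventually.of_forall fun y => ?_
    rw [norm_mul, Complex.norm_real]
    rw [show -Complex.I * ((y.1 : ℂ) * (ξ.1 : ℂ) + (y.2 : ℂ) * (ξ.2 : ℂ)) =
      ((-(y.1 * ξ.1 + y.2 * ξ.2) : ℝ) : ℂ) * Complex.I by push_cast; ring,
      Complex.norm_exp_ofReal_mul_I, mul_one]
  · exact Eventually.of_forall fun y => by fun_prop

lemma polar_h (g : ℝ × ℝ → ℝ) (h1 : ContDiff ℝ (⊤ : ℕ∞) g) (h2 : HasCompactSupport g)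
    (hr : IsRad g) (h : ℝ × ℝ → ℝ) (hh : Integrable h) (hrh : IsRad h) :
    ∫ η : ℝ × ℝ, ft2 g η * ft2 h η =
    ∫ ρ in Set.Ioi (0:ℝ), ft2 g (ρ, 0) * (2 * π * (ρ * ft2 h (ρ, 0))) := by
  obtain ⟨-, -, hi⟩ := ft2_decay g h1 h2
  have key := prod_set_integral (fun ρ => (ρ:ℂ) * ft2 g (ρ, 0)) hi (fun p => ft2 h (p.1, 0))
    ((ft2_cont h hh).comp (by fun_prop : Continuous fun p : ℝ × ℝ => (p.1, (0:ℝ)))) _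
    (fun p => ft2_bound h _)
  rw [← integral_comp_polarCoord_symm, polarCoord_target]
  trans
  swap
  · refine key.trans ?_
    congr 1; ext ρ
    simp only [intervalIntegral.integral_const, Complex.real_smul]
    push_cast; ring
  · congr 1; ext p
    simp only [polarCoord_symm_apply, ft2_rad g hr, ft2_rad h hrh, Complex.real_smul, mul_assoc]

def Wf (a b θ : ℝ) : ℝ := a * sin θ + (b - a) * sin θ ^ 3 / 3

lemma Ang_int (a b t : ℝ) : ∫ θ in (-π)..π, Ang a b t θ =
    2 * t * ∫ θ in (0:ℝ)..π, Complex.exp (Complex.I * (t * cos θ : ℝ)) *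
      ((sin θ * Wf a b θ : ℝ) : ℂ) := by
  have hev : ∫ θ in (-π)..π, Ang a b t θ = 2 * ∫ θ in (0:ℝ)..π, Ang a b t θ := by
    have hii : ∀ u v, IntervalIntegrable (Ang a b t) volume u v := fun u v =>
      ((Ang_cont a b).comp (by fun_prop : Continuous fun θ : ℝ => (t, θ))).intervalIntegrable u v
    rw [← intervalIntegral.integral_add_adjacent_intervals (hii (-π) 0) (hii 0 π)]
    have : ∫ θ in (-π)..0, Ang a b t θ = ∫ θ in (0:ℝ)..π, Ang a b t θ := by
      have := intervalIntegral.integral_comp_neg (a := 0) (b := π) (Ang a b t)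
      rw [neg_zero] at this
      rw [← this]
      congr 1; ext θ; simp [Ang]
    rw [this]; ring
  have hW : ∀ θ : ℝ, HasDerivAt (fun θ => ((Wf a b θ : ℝ) : ℂ))
      ((cos θ * (a * cos θ ^ 2 + b * sin θ ^ 2) : ℝ) : ℂ) θ := by
    intro θ
    apply HasDerivAt.ofReal_comp
    have h1 := ((hasDerivAt_sin θ).const_mul a).add
      ((((hasDerivAt_sin θ).pow 3).const_mul (b - a)).div_const 3)
    have e : cos θ * (a * cos θ ^ 2 + b * sin θ ^ 2) =
        a * cos θ + (b - a) * ((3 : ℕ) * sin θ ^ (3 - 1) * cos θ) / 3 := by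
      push_cast
      linear_combination (a * cos θ) * (sin_sq_add_cos_sq θ)
    rw [e]
    exact h1
  have hE : ∀ θ : ℝ, HasDerivAt (fun θ : ℝ => Complex.exp (Complex.I * (t * cos θ : ℝ)))
      (Complex.exp (Complex.I * (t * cos θ : ℝ)) * (Complex.I * ((t * -sin θ : ℝ) : ℂ))) θ := by
    intro θ
    exact ((((hasDerivAt_cos θ).const_mul t).ofReal_comp).const_mul Complex.I).cexp
  have ibp := intervalIntegral.integral_mul_deriv_eq_deriv_mul (a := 0) (b := π)
    (fun θ _ => hE θ) (fun θ _ => hW θ)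
    (Continuous.intervalIntegrable (by fun_prop) _ _)
    (Continuous.intervalIntegrable (by fun_prop) _ _)
  simp only [show Wf a b π = 0 by simp [Wf], show Wf a b 0 = 0 by simp [Wf], Complex.ofReal_zero,
    mul_zero, sub_zero, zero_sub] at ibp
  rw [hev]
  have e1 : ∫ θ in (0:ℝ)..π, Ang a b t θ = -Complex.I * ∫ θ in (0:ℝ)..π,
      Complex.exp (Complex.I * (t * cos θ : ℝ)) *
        ((cos θ * (a * cos θ ^ 2 + b * sin θ ^ 2) : ℝ) : ℂ) := by
    rw [← intervalIntegral.integral_const_mul]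
    congr 1; ext θ; unfold Ang; ring
  rw [e1, ibp, ← intervalIntegral.integral_neg, ← intervalIntegral.integral_const_mul,
    ← intervalIntegral.integral_const_mul, ← intervalIntegral.integral_const_mul]
  congr 1; ext θ
  generalize Complex.exp (Complex.I * (t * cos θ : ℝ)) = E
  push_cast
  linear_combination (-2 * E * t * Complex.sin θ * Wf a b θ) * Complex.I_sq

def hx (a b x : ℝ) (y : ℝ × ℝ) : ℝ :=
  if y.1 ^ 2 + y.2 ^ 2 < x ^ 2 then (a + b) + (a - b) * ((y.1 ^ 2 + y.2 ^ 2) / x ^ 2) else 0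

lemma hx_rad (a b x : ℝ) : IsRad (hx a b x) := by
  intro y z h; simp only [hx, h]

lemma hx_int (a b x : ℝ) : Integrable (hx a b x) := by
  have hm : MeasurableSet {y : ℝ × ℝ | y.1 ^ 2 + y.2 ^ 2 < x ^ 2} :=
    measurableSet_lt (by fun_prop) (by fun_prop)
  have : hx a b x = Set.indicator {y : ℝ × ℝ | y.1 ^ 2 + y.2 ^ 2 < x ^ 2}
      (fun y => (a + b) + (a - b) * ((y.1 ^ 2 + y.2 ^ 2) / x ^ 2)) := by
    ext y; simp [hx, Set.indicator]
  rw [this, integrable_indicator_iff hm]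
  have hK : IsCompact (Set.Icc (-|x|) |x| ×ˢ Set.Icc (-|x|) |x|) := isCompact_Icc.prod isCompact_Icc
  have hc : Continuous (fun y : ℝ × ℝ => (a + b) + (a - b) * ((y.1 ^ 2 + y.2 ^ 2) / x ^ 2)) := by
    fun_prop
  refine (hc.continuousOn.integrableOn_compact hK).mono_set ?_
  intro y hy
  have hy : y.1 ^ 2 + y.2 ^ 2 < x ^ 2 := hy
  refine ⟨abs_le.1 (sq_le_sq.1 ?_), abs_le.1 (sq_le_sq.1 ?_)⟩ <;> nlinarith [sq_nonneg y.1, sq_nonneg y.2]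

def Qf (a b x s : ℝ) : ℝ :=
  2 * √(x ^ 2 - s ^ 2) * ((a + b) + (a - b) * ((s ^ 2 + √(x ^ 2 - s ^ 2) ^ 2 / 3) / x ^ 2))

lemma hx_inner (a b x s : ℝ) : ∫ t, hx a b x (s, t) = Qf a b x s := by
  by_cases h : s ^ 2 < x ^ 2
  · set A := √(x ^ 2 - s ^ 2) with hA
    have hA0 : 0 ≤ A := sqrt_nonneg _
    have hA2 : A ^ 2 = x ^ 2 - s ^ 2 := Real.sq_sqrt (by linarith)
    have e : (fun t => hx a b x (s, t)) = Set.indicator (Set.Ioo (-A) A)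
        (fun t => (a + b) + (a - b) * ((s ^ 2 + t ^ 2) / x ^ 2)) := by
      ext t
      have : s ^ 2 + t ^ 2 < x ^ 2 ↔ t ∈ Set.Ioo (-A) A := by
        rw [Set.mem_Ioo, ← abs_lt, ← abs_of_nonneg hA0, ← sq_lt_sq, hA2]
        constructor <;> intro h <;> linarith
      simp [hx, Set.indicator, this]
    rw [e, integral_indicator measurableSet_Ioo, ← integral_Ioc_eq_integral_Ioo,
      ← intervalIntegral.integral_of_le (by linarith)]
    have hd : ∀ t ∈ Set.uIcc (-A) A, HasDerivAt
        (fun t => (a + b) * t + (a - b) * ((s ^ 2 * t + t ^ 3 / 3) / x ^ 2))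
        ((a + b) + (a - b) * ((s ^ 2 + t ^ 2) / x ^ 2)) t := by
      intro t _
      have h1 := ((hasDerivAt_id t).const_mul (a + b)).add
        (((((hasDerivAt_id t).const_mul (s ^ 2)).add
          (((hasDerivAt_pow 3 t)).div_const 3)).div_const (x ^ 2)).const_mul (a - b))
      have e : (a + b) + (a - b) * ((s ^ 2 + t ^ 2) / x ^ 2) = (a + b) * 1 + (a - b) *
        ((s ^ 2 * 1 + ((3:ℕ) * t ^ (3 - 1)) / 3) / x ^ 2) := by push_cast; ring
      rw [e]; exact h1
    rw [intervalIntegral.integral_eq_sub_of_hasDerivAt hd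
      (Continuous.intervalIntegrable (by fun_prop) _ _)]
    simp only [Qf, ← hA]
    ring
  · have : ∀ t, hx a b x (s, t) = 0 := by
      intro t; simp only [hx]; rw [if_neg]; nlinarith [sq_nonneg t]
    simp only [this, integral_zero, Qf]
    rw [Real.sqrt_eq_zero_of_nonpos (by linarith)]; simp

lemma ft2_hx (a b x ρ : ℝ) (hx0 : 0 < x) : ft2 (hx a b x) (ρ, 0) =
    4 * x ^ 2 * ∫ θ in (0:ℝ)..π, Complex.exp (Complex.I * (x * ρ * cos θ : ℝ)) *
      ((sin θ * Wf a b θ : ℝ) : ℂ) := by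
  have hint : Integrable (fun y : ℝ × ℝ => (hx a b x y : ℂ) *
      Complex.exp (-Complex.I * ((y.1 : ℂ) * (ρ : ℂ) + (y.2 : ℂ) * ((0:ℝ) : ℂ)))) := by
    refine (hx_int a b x).ofReal.mul_bdd (c := 1) (Continuous.aestronglyMeasurable (by fun_prop)) ?_
    refine Eventually.of_forall fun y => ?_
    rw [show -Complex.I * ((y.1 : ℂ) * (ρ : ℂ) + (y.2 : ℂ) * ((0:ℝ) : ℂ)) =
      ((-(y.1 * ρ) : ℝ) : ℂ) * Complex.I by push_cast; ring, Complex.norm_exp_ofReal_mul_I]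
  unfold ft2
  rw [Measure.volume_eq_prod] at hint ⊢
  rw [integral_prod _ hint]
  set G : ℝ → ℂ := fun s => (Qf a b x s : ℂ) * Complex.exp (-Complex.I * ((s : ℂ) * (ρ : ℂ))) with hG
  have e1 : ∀ s : ℝ, ∫ t : ℝ, (hx a b x (s, t) : ℂ) *
      Complex.exp (-Complex.I * (((s, t).1 : ℂ) * (ρ : ℂ) + ((s, t).2 : ℂ) * ((0:ℝ) : ℂ))) = G s := by
    intro s
    simp only [Complex.ofReal_zero, mul_zero, add_zero]
    rw [integral_mul_const, integral_complex_ofReal, hx_inner]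
  have e2 : ∫ s, G s = ∫ s in (-x)..x, G s := by
    rw [intervalIntegral.integral_of_le (by linarith), ← integral_indicator measurableSet_Ioc]
    congr 1; ext s
    by_cases hs : s ∈ Set.Ioc (-x) x
    · rw [Set.indicator_of_mem hs]
    · rw [Set.indicator_of_notMem hs]
      have : x ^ 2 - s ^ 2 ≤ 0 := by
        rw [Set.mem_Ioc, not_and_or, not_lt, not_le] at hs
        rcases hs with h | h <;> nlinarith
      simp [hG, Qf, Real.sqrt_eq_zero_of_nonpos this]
  have hGc : Continuous G := by
    simp only [hG, Qf]; fun_prop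
  have e3 := intervalIntegral.integral_deriv_smul_comp (a := 0) (b := π)
    (f := fun θ => -x * cos θ) (f' := fun θ => -x * -sin θ) (g := G)
    (fun θ _ => (hasDerivAt_cos θ).const_mul (-x)) (by fun_prop) hGc
  simp only [cos_zero, cos_pi, mul_one, mul_neg, neg_neg, neg_mul] at e3
  rw [integral_congr_ae (Eventually.of_forall e1), e2, ← e3,
    ← intervalIntegral.integral_const_mul]
  apply intervalIntegral.integral_congr
  intro θ hθ
  rw [Set.uIcc_of_le pi_pos.le] at hθ
  have hs : √(x ^ 2 - (-(x * cos θ)) ^ 2) = x * sin θ := by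
    rw [← Real.sqrt_sq (mul_nonneg hx0.le (sin_nonneg_of_mem_Icc hθ))]
    congr 1
    linear_combination (-x ^ 2) * (sin_sq_add_cos_sq θ)
  have hQ : Qf a b x (-(x * cos θ)) = 4 * x * Wf a b θ := by
    unfold Qf Wf
    rw [hs]
    field_simp
    linear_combination (6 * sin θ * (a - b)) * (sin_sq_add_cos_sq θ)
  simp only [Function.comp, hG, hQ, Complex.real_smul]
  rw [show -Complex.I * (((-(x * cos θ) : ℝ) : ℂ) * (ρ : ℂ)) = Complex.I * ((x * ρ * cos θ : ℝ) : ℂ) by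
    push_cast; ring]
  generalize Complex.exp (Complex.I * ((x * ρ * cos θ : ℝ) : ℂ)) = E
  push_cast
  ring

def Sy (g : ℝ × ℝ → ℝ) (a b x : ℝ) : ℂ :=
  ((x / π : ℝ) : ℂ) * ∫ η : ℝ × ℝ, Complex.exp (Complex.I * (x : ℂ) * (η.1 : ℂ)) *
      (-Complex.I * (η.1 : ℂ) * (a * (η.1 : ℂ) ^ 2 + b * (η.2 : ℂ) ^ 2) /
        ((η.1 : ℂ) ^ 2 + (η.2 : ℂ) ^ 2) ^ 2) * ft2 g η

lemma ft2_neg (g : ℝ × ℝ → ℝ) (hg : IsRad g) (ξ : ℝ × ℝ) : ft2 g (-ξ) = ft2 g ξ := by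
  rw [← ft2_rot g hg π ξ, rotE_apply]
  congr 1; ext <;> simp

lemma Sy_neg (g : ℝ × ℝ → ℝ) (hg : IsRad g) (a b x : ℝ) : Sy g a b (-x) = Sy g a b x := by
  unfold Sy
  rw [← integral_neg_eq_self]
  rw [show ((-x / π : ℝ) : ℂ) = -((x / π : ℝ) : ℂ) by push_cast; ring, neg_mul, ← mul_neg,
    ← integral_neg]
  congr 2; ext η
  rw [ft2_neg g hg]
  simp only [Prod.fst_neg, Prod.snd_neg, Complex.ofReal_neg, neg_sq]
  rw [show Complex.I * -(x:ℂ) * -(η.1 : ℂ) = Complex.I * x * η.1 by ring]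
  ring

lemma Sy_pos (g : ℝ × ℝ → ℝ) (h1 : ContDiff ℝ (⊤ : ℕ∞) g) (h2 : HasCompactSupport g)
    (hr : IsRad g) (a b x : ℝ) (hx0 : 0 < x) :
    Sy g a b x = ((∫ y, g y * hx a b x y : ℝ) : ℂ) := by
  have P := parseval g h1 h2 (hx a b x) (hx_int a b x)
    (fun y => hx_rad a b x _ _ (by simp))
  rw [polar_h g h1 h2 hr _ (hx_int a b x) (hx_rad a b x)] at P
  unfold Sy
  rw [polar_sym g h1 h2 hr]
  have e : ∀ ρ : ℝ, ft2 g (ρ, 0) * (2 * π * (ρ * ft2 (hx a b x) (ρ, 0))) =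
      (4 * π * x : ℂ) * (ft2 g (ρ, 0) * ∫ θ in (-π)..π, Ang a b (x * ρ) θ) := by
    intro ρ
    rw [ft2_hx a b x ρ hx0, Ang_int]
    push_cast
    ring
  simp only [e] at P
  rw [integral_const_mul] at P
  have hp : (π : ℂ) ≠ 0 := by exact_mod_cast pi_ne_zero
  push_cast at P ⊢
  apply mul_left_cancel₀ (mul_ne_zero (by norm_num) (pow_ne_zero 2 hp) : (4 * (π:ℂ) ^ 2) ≠ 0)
  rw [← P]
  field_simp

lemma Sy_eq (g : ℝ × ℝ → ℝ) (h1 : ContDiff ℝ (⊤ : ℕ∞) g) (h2 : HasCompactSupport g)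
    (hr : IsRad g) (a b x : ℝ) (hx0 : x ≠ 0) :
    Sy g a b x = ((∫ y, g y * hx a b x y : ℝ) : ℂ) := by
  rcases lt_or_gt_of_ne hx0 with h | h
  · rw [← Sy_neg g hr, Sy_pos g h1 h2 hr a b (-x) (by linarith)]
    simp only [hx, neg_sq]
  · exact Sy_pos g h1 h2 hr a b x h

def kf (c d q x : ℝ) : ℝ := if q < x ^ 2 then c * (q / x ^ 2) else d

lemma kf_bound (c d q x : ℝ) (hq : 0 ≤ q) : ‖kf c d q x‖ ≤ ((|c| + |d|) * (1 + q)) * (1 + x ^ 2)⁻¹ := by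
  unfold kf
  rw [← div_eq_mul_inv, le_div_iff₀ (by positivity)]
  have hc := abs_nonneg c
  have hd := abs_nonneg d
  split_ifs with h
  · have hx : 0 < x ^ 2 := by linarith
    rw [norm_mul, Real.norm_eq_abs, Real.norm_of_nonneg (by positivity)]
    have : q / x ^ 2 * (1 + x ^ 2) ≤ 1 + q := by
      rw [div_mul_eq_mul_div, div_le_iff₀ hx]; nlinarith
    calc |c| * (q / x ^ 2) * (1 + x ^ 2) = |c| * (q / x ^ 2 * (1 + x ^ 2)) := by ring
      _ ≤ |c| * (1 + q) := by gcongr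
      _ ≤ _ := by nlinarith
  · rw [Real.norm_eq_abs]; nlinarith

lemma kf_meas (c d : ℝ) : Measurable (fun p : ℝ × ℝ => kf c d p.1 p.2) := by
  unfold kf
  exact Measurable.ite (measurableSet_lt (by fun_prop) (by fun_prop)) (by fun_prop) (by fun_prop)

lemma kf_integral (c d r : ℝ) (hr : 0 ≤ r) : ∫ x, kf c d (r ^ 2) x = 2 * (c + d) * r := by
  have e : ∀ x, kf c d (r ^ 2) x = kf c d (r ^ 2) |x| := by intro x; simp [kf]
  rw [integral_congr_ae (Eventually.of_forall e), integral_comp_abs (f := kf c d (r ^ 2))]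
  have hi : Integrable (kf c d (r ^ 2)) := by
    refine ((integrable_inv_one_add_sq).const_mul ((|c| + |d|) * (1 + r ^ 2))).mono'
      ((kf_meas c d).comp (by fun_prop : Measurable fun x : ℝ => (r ^ 2, x))).aestronglyMeasurable
      (Eventually.of_forall fun x => kf_bound c d _ x (sq_nonneg r))
  rw [← Set.Ioc_union_Ioi_eq_Ioi hr, setIntegral_union (Set.Ioc_disjoint_Ioi le_rfl)
    measurableSet_Ioi hi.integrableOn hi.integrableOn]
  have i1 : ∫ x in Set.Ioc 0 r, kf c d (r ^ 2) x = d * r := by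
    rw [setIntegral_congr_fun (g := fun _ => d) measurableSet_Ioc]
    · simp [hr, mul_comm]
    · intro x hx
      simp only [kf]; rw [if_neg]; nlinarith [hx.1, hx.2]
  have i2 : ∫ x in Set.Ioi r, kf c d (r ^ 2) x = c * r := by
    rcases hr.eq_or_lt with h | h
    · subst h
      rw [setIntegral_congr_fun (g := fun _ => 0) measurableSet_Ioi]
      · simp
      · intro x hx
        have hx : 0 < x := hx
        simp only [kf]; rw [if_pos (by nlinarith)]; simp
    · rw [setIntegral_congr_fun (g := fun x => (c * r ^ 2) * x ^ (-2 : ℝ)) measurableSet_Ioi]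
      · rw [integral_const_mul, integral_Ioi_rpow_of_lt (by norm_num) h,
          show (-2 + 1 : ℝ) = -1 by norm_num, rpow_neg_one]
        field_simp
      · intro x hx
        have hx : r < x := hx
        have hx0 : 0 < x := h.trans hx
        simp only [kf]
        rw [if_pos (by nlinarith), rpow_neg hx0.le, rpow_two]
        ring
  rw [i1, i2]; ring

lemma final (g : ℝ × ℝ → ℝ) (h1 : Continuous g) (h2 : HasCompactSupport g) (c d : ℝ)
    (F : ℝ → ℂ) (hF : ∀ x ≠ 0, F x = ((∫ y, g y * kf c d (y.1 ^ 2 + y.2 ^ 2) x : ℝ) : ℂ)) :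
    Integrable F ∧ ∫ x, F x =
      ((2 * (c + d) * ∫ y : ℝ × ℝ, √(y.1 ^ 2 + y.2 ^ 2) * g y : ℝ) : ℂ) := by
  have hae : F =ᵐ[volume] fun x => ((∫ y, g y * kf c d (y.1 ^ 2 + y.2 ^ 2) x : ℝ) : ℂ) := by
    filter_upwards [Measure.ae_ne volume (0:ℝ)] with x hx using hF x hx
  have hi : Integrable (fun p : ℝ × (ℝ × ℝ) => g p.2 * kf c d (p.2.1 ^ 2 + p.2.2 ^ 2) p.1)
      (volume.prod volume) := by
    have hw : Integrable (fun y : ℝ × ℝ => ‖g y‖ * ((|c| + |d|) * (1 + (y.1 ^ 2 + y.2 ^ 2)))) :=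
      Continuous.integrable_of_hasCompactSupport (by fun_prop) (h2.norm.mul_right)
    refine (integrable_inv_one_add_sq.mul_prod hw).mono' ?_ (Eventually.of_forall fun p => ?_)
    · refine Measurable.aestronglyMeasurable ?_
      refine (h1.measurable.comp measurable_snd).mul ((kf_meas c d).comp
        (by fun_prop : Measurable fun p : ℝ × (ℝ × ℝ) => (p.2.1 ^ 2 + p.2.2 ^ 2, p.1)))
    · rw [norm_mul]
      have := kf_bound c d (p.2.1 ^ 2 + p.2.2 ^ 2) p.1 (by positivity)
      calc _ ≤ ‖g p.2‖ * (((|c| + |d|) * (1 + (p.2.1 ^ 2 + p.2.2 ^ 2))) * (1 + p.1 ^ 2)⁻¹) := by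
            gcongr
        _ = _ := by ring
  have hi1 := hi.integral_prod_left
  refine ⟨(integrable_congr hae).2 hi1.ofReal, ?_⟩
  rw [integral_congr_ae hae, integral_complex_ofReal]
  congr 1
  rw [integral_integral_swap (f := fun x (y : ℝ × ℝ) => g y * kf c d (y.1 ^ 2 + y.2 ^ 2) x) hi,
    ← integral_const_mul]
  congr 1; ext y
  have := kf_integral c d (√(y.1 ^ 2 + y.2 ^ 2)) (sqrt_nonneg _)
  rw [Real.sq_sqrt (by positivity)] at this
  rw [integral_const_mul, this]
  ring


/-- Integrability of `f₂`, `f₃` over `ℝ` and the values of their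
integrals: `∫ f₂ = 4 m₁` and `∫ f₃ = −4 m₁`. -/
theorem statement9 (ϕ : ℝ × ℝ → ℝ)
    (hsmooth : ContDiff ℝ (⊤ : ℕ∞) ϕ)
    (hsupp : HasCompactSupport ϕ)
    (hradial : ∀ x y : ℝ × ℝ, x.1 ^ 2 + x.2 ^ 2 = y.1 ^ 2 + y.2 ^ 2 → ϕ x = ϕ y)
    (hnorm : (∫ x : ℝ × ℝ, ϕ x) = 1) :
    Integrable (f2 ϕ) ∧ Integrable (f3 ϕ) ∧
      (∫ x : ℝ, f2 ϕ x) = ((4 * m1 ϕ : ℝ) : ℂ) ∧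
      (∫ x : ℝ, f3 ϕ x) = ((-(4 * m1 ϕ) : ℝ) : ℂ) := by
  obtain ⟨hs, hc, hn⟩ := conv2_props ϕ hsmooth hsupp hnorm
  have hr : IsRad (conv2 ϕ) := conv2_rad ϕ hradial
  have hi : Integrable (conv2 ϕ) := hs.continuous.integrable_of_hasCompactSupport hc
  have A := final (conv2 ϕ) hs.continuous hc 2 0 (f2 ϕ) (by
    intro x hx0
    have e : f2 ϕ x = Sy (conv2 ϕ) 1 (-1) x := by
      unfold f2 Sy
      congr 2; ext η
      push_cast
      ring
    rw [e, Sy_eq _ hs hc hr _ _ _ hx0]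
    congr 2; ext y
    simp only [hx, kf]
    congr 2 <;> ring)
  have B := final (conv2 ϕ) hs.continuous hc (-1) (-1) (f3 ϕ) (by
    intro x hx0
    have e : f1 ϕ x = Sy (conv2 ϕ) 0 1 x := by
      unfold f1 Sy
      congr 2; ext η
      push_cast
      ring
    have hgi : Integrable (fun y => conv2 ϕ y * hx 0 1 x y) := by
      have hm : AEStronglyMeasurable (hx 0 1 x) := (hx_int 0 1 x).aestronglyMeasurable
      refine hi.mul_bdd (c := 1) hm (Eventually.of_forall fun y => ?_)
      simp only [hx]
      split_ifs with h
      · have hp : 0 < x ^ 2 := by positivity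
        have h0 : 0 ≤ (y.1 ^ 2 + y.2 ^ 2) / x ^ 2 := by positivity
        have h1 : (y.1 ^ 2 + y.2 ^ 2) / x ^ 2 ≤ 1 := by
          rw [div_le_one hp]; exact h.le
        rw [Real.norm_eq_abs, abs_le]; constructor <;> linarith
      · simp
    rw [f3, e, Sy_eq _ hs hc hr _ _ _ hx0]
    have hn' : (1 : ℂ) = ((∫ y, conv2 ϕ y : ℝ) : ℂ) := by rw [hn, Complex.ofReal_one]
    rw [hn', ← Complex.ofReal_sub, ← integral_sub hgi hi]
    congr 2; ext y
    simp only [hx, kf]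
    split_ifs <;> ring)
  refine ⟨A.1, B.1, ?_, ?_⟩
  · rw [A.2, m1]; congr 1; ring
  · rw [B.2, m1]; congr 1; ring
end
end

section
/- Let ϕ, φ, φ̂, m₁ be as in the context, and let ∂₂φ̂(0,η) denote the partial derivative of φ̂ with respect to its second variable, evaluated at the point (0,η). Then for each δ > 0 the integral ∫_{|η| ≥ δ} η^{−1} ∂₂φ̂(0,η) dη is absolutely convergent, and lim_{δ → 0⁺} ∫_{|η| ≥ δ} η^{−1} ∂₂φ̂(0,η) dη = −2 m₁. -/
open MeasureTheory Real Filter Topology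
open scoped ENNReal

noncomputable section

open scoped FourierTransform

lemma conv2_eq_complex (ϕ : ℝ × ℝ → ℝ) (z : ℂ) :
    conv2 ϕ (z.re, z.im) = ∫ w : ℂ, ϕ (w.re, w.im) * ϕ ((z - w).re, (z - w).im) := by
  unfold conv2
  rw [← Complex.volume_preserving_equiv_real_prod.integral_comp
    Complex.measurableEquivRealProd.measurableEmbedding]
  rfl

lemma conv2_rot (ϕ : ℝ × ℝ → ℝ)
    (hradial : ∀ x y : ℝ × ℝ, x.1 ^ 2 + x.2 ^ 2 = y.1 ^ 2 + y.2 ^ 2 → ϕ x = ϕ y)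
    (z : ℂ) (c : Circle) :
    conv2 ϕ ((c * z : ℂ).re, (c * z : ℂ).im) = conv2 ϕ (z.re, z.im) := by
  have key : ∀ w : ℂ, ϕ ((c * w : ℂ).re, (c * w : ℂ).im) = ϕ (w.re, w.im) := by
    intro w
    apply hradial
    have h1 : Complex.normSq (c * w : ℂ) = Complex.normSq w := by simp
    simp only [Complex.normSq_apply] at h1
    simp only [sq]
    exact h1
  rw [conv2_eq_complex, conv2_eq_complex,
    ← ((rotation c).measurePreserving).integral_comp (rotation c).toHomeomorph.measurableEmbedding]
  congr 1
  ext w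
  rw [rotation_apply, key, ← mul_sub, key]

lemma conv2_polar (ϕ : ℝ × ℝ → ℝ)
    (hradial : ∀ x y : ℝ × ℝ, x.1 ^ 2 + x.2 ^ 2 = y.1 ^ 2 + y.2 ^ 2 → ϕ x = ϕ y)
    (r θ : ℝ) : conv2 ϕ (r * cos θ, r * sin θ) = conv2 ϕ (r, 0) := by
  have := conv2_rot ϕ hradial (r : ℂ) (Circle.exp θ)
  rw [Circle.coe_exp] at this
  simp [Complex.exp_ofReal_mul_I_re, Complex.exp_ofReal_mul_I_im] at this
  rw [mul_comm r, mul_comm r]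
  exact this

lemma conv2_neg (ϕ : ℝ × ℝ → ℝ)
    (hradial : ∀ x y : ℝ × ℝ, x.1 ^ 2 + x.2 ^ 2 = y.1 ^ 2 + y.2 ^ 2 → ϕ x = ϕ y)
    (a b : ℝ) : conv2 ϕ (-a, -b) = conv2 ϕ (a, b) := by
  have := conv2_rot ϕ hradial (⟨a, b⟩ : ℂ) (Circle.exp π)
  rw [Circle.coe_exp] at this
  simpa using this

lemma integral_abs_sin : ∫ θ in Set.Ioo (-π) π, |sin θ| = 4 := by
  rw [← integral_Ioc_eq_integral_Ioo, ← intervalIntegral.integral_of_le (by linarith [pi_pos])]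
  have hc : Continuous fun θ => |sin θ| := by fun_prop
  rw [← intervalIntegral.integral_add_adjacent_intervals (b := 0)
    (hc.intervalIntegrable _ _) (hc.intervalIntegrable _ _)]
  have h2 : ∫ θ in (0:ℝ)..π, |sin θ| = 2 := by
    rw [intervalIntegral.integral_congr (g := sin)]
    · rw [integral_sin]; norm_num
    · intro x hx
      rw [Set.uIcc_of_le pi_pos.le] at hx
      exact abs_of_nonneg (sin_nonneg_of_mem_Icc hx)
  have h1 : ∫ θ in (-π)..0, |sin θ| = 2 := by
    rw [← h2]
    have := intervalIntegral.integral_comp_neg (a := 0) (b := π) (fun θ => |sin θ|)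
    simp only [sin_neg, abs_neg, neg_zero] at this
    exact this.symm
  rw [h1, h2]; norm_num

lemma radial_moment (ϕ : ℝ × ℝ → ℝ)
    (hradial : ∀ x y : ℝ × ℝ, x.1 ^ 2 + x.2 ^ 2 = y.1 ^ 2 + y.2 ^ 2 → ϕ x = ϕ y) :
    π * ∫ x : ℝ × ℝ, |x.2| * conv2 ϕ x = 2 * m1 ϕ := by
  unfold m1
  rw [← integral_comp_polarCoord_symm, ← integral_comp_polarCoord_symm (fun x : ℝ × ℝ => √(_) * _)]
  have hT : polarCoord.target = Set.Ioi (0:ℝ) ×ˢ Set.Ioo (-π) π := rfl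
  have hm : MeasurableSet polarCoord.target := polarCoord.open_target.measurableSet
  have e1 : ∫ p in polarCoord.target, p.1 • (|(polarCoord.symm p).2| * conv2 ϕ (polarCoord.symm p))
      = (∫ r in Set.Ioi (0:ℝ), r ^ 2 * conv2 ϕ (r, 0)) * ∫ θ in Set.Ioo (-π) π, |sin θ| := by
    rw [← setIntegral_prod_mul, hT]
    refine setIntegral_congr_fun hm ?_
    rintro ⟨r, θ⟩ ⟨hr, -⟩
    have hr : 0 < r := hr
    simp only [polarCoord_symm_apply, conv2_polar ϕ hradial, smul_eq_mul, abs_mul, abs_of_pos hr]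
    ring
  have e2 : ∫ p in polarCoord.target, p.1 •
        (√((polarCoord.symm p).1 ^ 2 + (polarCoord.symm p).2 ^ 2) * conv2 ϕ (polarCoord.symm p))
      = (∫ r in Set.Ioi (0:ℝ), r ^ 2 * conv2 ϕ (r, 0)) * ∫ θ in Set.Ioo (-π) π, (1:ℝ) := by
    rw [← setIntegral_prod_mul, hT]
    refine setIntegral_congr_fun hm ?_
    rintro ⟨r, θ⟩ ⟨hr, -⟩
    have hr : 0 < r := hr
    have : (r * cos θ) ^ 2 + (r * sin θ) ^ 2 = r ^ 2 := by
      nlinarith [sin_sq_add_cos_sq θ]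
    simp only [polarCoord_symm_apply, conv2_polar ϕ hradial, smul_eq_mul, this,
      sqrt_sq hr.le]
    ring
  rw [e1, e2, integral_abs_sin]
  have : ∫ θ in Set.Ioo (-π) π, (1:ℝ) = 2 * π := by
    simp [pi_pos.le]; ring
  rw [this]; ring

lemma conv2_eq_conv (ϕ : ℝ × ℝ → ℝ) :
    conv2 ϕ = convolution ϕ ϕ (ContinuousLinearMap.mul ℝ ℝ) volume := by
  ext x; simp [conv2, convolution_def]

/-- The one-dimensional analytic core. -/
lemma core (g : ℝ → ℝ) (hg : ContDiff ℝ (⊤ : ℕ∞) g) (hs : HasCompactSupport g)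
    (heven : ∀ t, g (-t) = g t) :
    ∃ F : ℝ → ℂ, Integrable F ∧ (∀ η : ℝ, η ≠ 0 →
      (η : ℂ)⁻¹ * deriv (fun t : ℝ => 𝓕 (fun x => (g x : ℂ)) (t / (2 * π))) η = F η) ∧
      ∫ η, F η = ((-π * ∫ t, |t| * g t : ℝ) : ℂ) := by
  obtain ⟨R, hR0, hR⟩ : ∃ R : ℝ, 0 < R ∧ ∀ t, R < |t| → g t = 0 := by
    obtain ⟨R, hR0, hR⟩ := hs.isCompact.isBounded.exists_pos_norm_le
    refine ⟨R, hR0, fun t ht => ?_⟩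
    by_contra h
    exact absurd (hR t (subset_tsupport _ h)) (not_le.mpr ht)
  have hgc : Continuous g := hg.continuous
  have hkc : Continuous fun u : ℝ => u * g u := by fun_prop
  have hii : ∀ a b : ℝ, IntervalIntegrable (fun u : ℝ => u * g u) volume a b :=
    fun a b => hkc.intervalIntegrable a b
  let h : ℝ → ℝ := fun t => - ∫ u in (-R)..t, u * g u
  have hd : ∀ t, HasDerivAt h (-(t * g t)) t := fun t =>
    (hkc.integral_hasStrictDerivAt (-R) t).hasDerivAt.neg
  let H : ℝ → ℂ := fun t => (h t : ℂ)
  have hdH : ∀ t, HasDerivAt H ((-(t * g t) : ℝ) : ℂ) t := fun t => (hd t).ofReal_comp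
  have hderiv : deriv H = fun t => ((-(t * g t) : ℝ) : ℂ) := funext fun t => (hdH t).deriv
  have hHs : ContDiff ℝ (⊤ : ℕ∞) H := by
    rw [contDiff_infty_iff_deriv]
    refine ⟨fun t => (hdH t).differentiableAt, ?_⟩
    rw [hderiv]
    exact Complex.ofRealCLM.contDiff.comp ((contDiff_id.mul hg).neg)
  have hodd : ∫ u in (-R)..R, u * g u = 0 := by
    have := intervalIntegral.integral_comp_neg (a := -R) (b := R) (fun u => u * g u)
    simp only [heven, neg_mul, intervalIntegral.integral_neg, neg_neg] at this
    linarith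
  have hHc : HasCompactSupport H := by
    refine HasCompactSupport.intro (K := Set.Icc (-R) R) isCompact_Icc fun t ht => ?_
    have : h t = 0 := by
      simp only [h, neg_eq_zero]
      rcases lt_or_ge t (-R) with h1 | h1
      · rw [intervalIntegral.integral_symm, neg_eq_zero]
        apply intervalIntegral.integral_zero_ae
        refine (Measure.ae_ne volume (-R)).mono fun u hune hu => ?_
        rw [Set.uIoc_of_le h1.le] at hu
        have hlt : u < -R := lt_of_le_of_ne hu.2 hune
        rw [hR u (by rw [abs_of_neg (by linarith)]; linarith), mul_zero]
      · have h2 : R < t := by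
          by_contra h2; exact ht ⟨h1, not_lt.mp h2⟩
        rw [← intervalIntegral.integral_add_adjacent_intervals (hii _ R) (hii _ _), hodd, zero_add]
        apply intervalIntegral.integral_zero_ae
        refine Filter.Eventually.of_forall fun u hu => ?_
        rw [Set.uIoc_of_le h2.le] at hu
        rw [hR u (by rw [abs_of_pos (by linarith [hu.1])]; exact hu.1), mul_zero]
    simp [H, this]
  have hHi : Integrable H := hHs.continuous.integrable_of_hasCompactSupport hHc
  let S : SchwartzMap ℝ ℂ := hHc.toSchwartzMap hHs
  have hSi : Integrable (𝓕 H) := (𝓕 S).integrable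
  have hval : ∫ w, 𝓕 H w = H 0 := by
    have := hHi.fourierInv_fourier_eq hSi (v := 0) hHs.continuous.continuousAt
    rw [Real.fourierInv_eq'] at this
    simpa using this
  have habs : ∫ t, |t| * g t = 2 * h 0 := by
    have h1 : ∫ t, |t| * g t = ∫ t in (-R)..R, |t| * g t := by
      rw [intervalIntegral.integral_of_le (by linarith), ← integral_Icc_eq_integral_Ioc]
      symm
      apply setIntegral_eq_integral_of_forall_compl_eq_zero
      intro t ht
      have : R < |t| := by
        by_contra h2
        exact ht (abs_le.mp (not_lt.mp h2))
      rw [hR t this, mul_zero]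
    have hac : Continuous fun u : ℝ => |u| * g u := by fun_prop
    have h2 : ∫ t in (-R)..0, |t| * g t = h 0 := by
      simp only [h, ← intervalIntegral.integral_neg]
      apply intervalIntegral.integral_congr
      intro t ht
      rw [Set.uIcc_of_le (by linarith)] at ht
      simp only [abs_of_nonpos ht.2]; ring
    have h3 : ∫ t in (0:ℝ)..R, |t| * g t = h 0 := by
      rw [← h2]
      have := intervalIntegral.integral_comp_neg (a := 0) (b := R) (fun u => |u| * g u)
      simpa only [heven, abs_neg, neg_zero] using this
    rw [h1, ← intervalIntegral.integral_add_adjacent_intervals (b := 0)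
      (hac.intervalIntegrable _ _) (hac.intervalIntegrable _ _), h2, h3]
    ring
  have hgi : Integrable fun x => (g x : ℂ) := by
    refine Integrable.ofReal (hgc.integrable_of_hasCompactSupport hs)
  have hxgi : Integrable fun x : ℝ => x * g x :=
    hkc.integrable_of_hasCompactSupport hs.mul_left
  have hxgi' : Integrable fun x : ℝ => x • (g x : ℂ) := by
    simpa using hxgi.ofReal (𝕜 := ℂ)
  have hdi : Integrable (deriv H) := by
    rw [hderiv]; exact hxgi.neg.ofReal
  have hF := Real.fourier_deriv hHi (fun t => (hdH t).differentiableAt) hdi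
  have h2pi : (2 * π) ≠ 0 := by positivity
  refine ⟨fun η => - 𝓕 H (η / (2 * π)), (hSi.comp_div h2pi).neg, ?_, ?_⟩
  · intro η hη
    have hD := (Real.hasDerivAt_fourier hgi hxgi' (η / (2 * π))).scomp η
      ((hasDerivAt_id η).div_const (2 * π))
    have hD' : deriv (fun t : ℝ => 𝓕 (fun x => (g x : ℂ)) (t / (2 * π))) η = _ := hD.deriv
    rw [hD']
    have : (fun x : ℝ => (-2 * π * Complex.I * x : ℂ) • (g x : ℂ)) =
        (2 * π * Complex.I : ℂ) • deriv H := by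
      rw [hderiv]; ext x; simp; ring
    rw [this]
    have h4 : 𝓕 ((2 * π * Complex.I : ℂ) • deriv H) (η / (2 * π)) =
        (2 * π * Complex.I : ℂ) * 𝓕 (deriv H) (η / (2 * π)) := by
      simp only [Real.fourier_real_eq_integral_exp_smul, ← integral_const_mul, Pi.smul_apply,
        smul_eq_mul]
      congr 1; ext v; ring
    rw [h4, hF]
    have hη' : (η : ℂ) ≠ 0 := by exact_mod_cast hη
    have hpi' : (π : ℂ) ≠ 0 := by exact_mod_cast pi_ne_zero
    simp only [smul_eq_mul, Complex.real_smul]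
    push_cast
    field_simp
    rw [Complex.I_sq]; ring
  · rw [integral_neg, Measure.integral_comp_div (fun y => 𝓕 H y), hval, habs,
      abs_of_pos (by positivity)]
    simp only [H, Complex.real_smul]; push_cast; ring

lemma marginal_smooth (φ : ℝ × ℝ → ℝ) (hφ : ContDiff ℝ (⊤ : ℕ∞) φ) (hs : HasCompactSupport φ) :
    ContDiff ℝ (⊤ : ℕ∞) (fun t => ∫ x, φ (x, t)) ∧ HasCompactSupport (fun t => ∫ x, φ (x, t)) := by
  constructor
  · have hK : IsCompact ((fun p : ℝ × ℝ => -p.1) '' tsupport φ) :=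
      hs.isCompact.image (by fun_prop)
    have := contDiffOn_convolution_right_with_param (𝕜 := ℝ) (μ := (volume : Measure ℝ))
      (f := fun _ : ℝ => (1:ℝ)) (n := ⊤)
      (ContinuousLinearMap.mul ℝ ℝ) (g := fun (p x : ℝ) => φ (-x, p)) (s := Set.univ)
      (k := (fun p : ℝ × ℝ => -p.1) '' tsupport φ) isOpen_univ hK
      (by
        intro p x _ hx
        by_contra hne
        exact hx ⟨(-x, p), subset_tsupport _ hne, by simp⟩)
      (locallyIntegrable_const _)
      (by
        apply ContDiff.contDiffOn
        exact hφ.comp (contDiff_snd.neg.prodMk contDiff_fst))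
    rw [Set.univ_prod_univ, contDiffOn_univ] at this
    have h2 := this.comp (contDiff_id.prodMk (contDiff_const (c := (0:ℝ))))
    convert h2 using 1
    ext t
    simp [convolution_def]
  · refine HasCompactSupport.intro (hs.isCompact.image continuous_snd) fun t ht => ?_
    apply integral_eq_zero_of_ae
    refine Filter.Eventually.of_forall fun x => ?_
    by_contra hne
    exact ht ⟨(x, t), subset_tsupport _ hne, rfl⟩

/-- The principal value `p.v. ∫_ℝ η⁻¹ ∂₂φ̂(0,η) dη = −2 m₁`,
where `∂₂φ̂` is the partial derivative of `φ̂` in its second variable. -/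
theorem statement10 (ϕ : ℝ × ℝ → ℝ)
    (hsmooth : ContDiff ℝ (⊤ : ℕ∞) ϕ)
    (hsupp : HasCompactSupport ϕ)
    (hradial : ∀ x y : ℝ × ℝ, x.1 ^ 2 + x.2 ^ 2 = y.1 ^ 2 + y.2 ^ 2 → ϕ x = ϕ y)
    (hnorm : (∫ x : ℝ × ℝ, ϕ x) = 1) :
    (∀ δ : ℝ, 0 < δ →
      IntegrableOn
        (fun η : ℝ => (η : ℂ)⁻¹ * deriv (fun t : ℝ => ft2 (conv2 ϕ) (0, t)) η)
        {η : ℝ | δ ≤ |η|} volume) ∧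
    Filter.Tendsto
      (fun δ : ℝ =>
        ∫ η in {η : ℝ | δ ≤ |η|}, (η : ℂ)⁻¹ * deriv (fun t : ℝ => ft2 (conv2 ϕ) (0, t)) η)
      (nhdsWithin 0 (Set.Ioi 0)) (nhds ((-2 * m1 ϕ : ℝ) : ℂ)) := by
  have hc : ContDiff ℝ (⊤ : ℕ∞) (conv2 ϕ) := by
    rw [conv2_eq_conv]
    exact hsupp.contDiff_convolution_right _
      (hsmooth.continuous.integrable_of_hasCompactSupport hsupp).locallyIntegrable hsmooth
  have hcs : HasCompactSupport (conv2 ϕ) := by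
    rw [conv2_eq_conv]
    exact HasCompactSupport.convolution _ hsupp hsupp
  obtain ⟨hg, hgs⟩ := marginal_smooth _ hc hcs
  set g : ℝ → ℝ := fun t => ∫ x, conv2 ϕ (x, t) with hgdef
  have heven : ∀ t, g (-t) = g t := by
    intro t
    simp only [hgdef]
    rw [← integral_neg_eq_self]
    simp only [conv2_neg ϕ hradial]
  obtain ⟨F, hFi, hF, hFint⟩ := core g hg hgs heven
  have hmom : ∫ t, |t| * g t = ∫ x : ℝ × ℝ, |x.2| * conv2 ϕ x := by
    rw [Measure.volume_eq_prod, integral_prod_symm]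
    · simp only [hgdef, integral_const_mul]
    · have : Continuous fun x : ℝ × ℝ => |x.2| * conv2 ϕ x := by
        have := hc.continuous
        fun_prop
      exact this.integrable_of_hasCompactSupport hcs.mul_left
  have hft : (fun t : ℝ => ft2 (conv2 ϕ) (0, t)) =
      fun t : ℝ => 𝓕 (fun x => (g x : ℂ)) (t / (2 * π)) := by
    ext t
    rw [Real.fourier_real_eq_integral_exp_smul]
    unfold ft2
    rw [Measure.volume_eq_prod, integral_prod_symm]
    · congr 1
      ext y
      simp only [hgdef, smul_eq_mul]
      have hpi' : (π : ℂ) ≠ 0 := by exact_mod_cast pi_ne_zero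
      have he : ∀ x : ℝ, (-Complex.I * ((x : ℂ) * ((0 : ℝ) : ℂ) + (y : ℂ) * (t : ℂ))) =
          ((-2 * π * y * (t / (2 * π)) : ℝ) : ℂ) * Complex.I := by
        intro x
        push_cast
        field_simp
        simp
      simp only [he]
      rw [integral_mul_const, integral_complex_ofReal, mul_comm]
    · have : Continuous fun x : ℝ × ℝ => (conv2 ϕ x : ℂ) * Complex.exp (-Complex.I *
          ((x.1 : ℂ) * (((0, t) : ℝ × ℝ).1 : ℂ) + (x.2 : ℂ) * (((0, t) : ℝ × ℝ).2 : ℂ))) := by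
        have := hc.continuous
        fun_prop
      refine this.integrable_of_hasCompactSupport ?_
      apply HasCompactSupport.mul_right
      exact hcs.comp_left (g := fun r : ℝ => (r : ℂ)) (by simp)
  have hae : (fun η : ℝ => (η : ℂ)⁻¹ * deriv (fun t : ℝ => ft2 (conv2 ϕ) (0, t)) η) =ᵐ[volume] F := by
    rw [hft]
    exact (Measure.ae_ne volume (0:ℝ)).mono fun η hη => hF η hη
  have hI := hFi.congr hae.symm
  refine ⟨fun δ _ => hI.integrableOn, ?_⟩
  have hcover : AECover (volume : Measure ℝ) (𝓝[>] (0:ℝ)) (fun δ : ℝ => {η : ℝ | δ ≤ |η|}) := by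
    refine ⟨(Measure.ae_ne volume (0:ℝ)).mono fun η hη => ?_, fun δ => ?_⟩
    · exact mem_nhdsWithin_of_mem_nhds (Iic_mem_nhds (abs_pos.mpr hη))
    · exact measurableSet_le measurable_const (by fun_prop)
  have hlim := hcover.integral_tendsto_of_countably_generated hI
  rw [integral_congr_ae hae, hFint, hmom, neg_mul, radial_moment ϕ hradial] at hlim
  convert hlim using 3
  ring
end
end
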